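/- arXiv:2006.02368 — 4 statements merged into one kernel-verified Lean document; each statement's English description precedes it below -/
import Mathlib

section
/- For any constants α > 0 and λ > 0 there exist constants C and n₀ such that for all n ≥ n₀ and every source vertex s of the star graph S_n, the visit-exchange protocol with |A| = ⌊α·n⌋ agents satisfies P[T_visitx(S_n, s) ≤ C·log n] ≥ 1 − n^{−λ}. -/
/-!
Every agent alternates between the center and a uniformly random leaf. Once the center is informed,
all agents are informed after one more round, and from then on every visited leaf becomes
informed. If the source is a leaf, the center is informed one round after the first visit to the
source. So it suffices that every leaf is visited in each of two disjoint windows of `2m` rounds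
(`vxInf_eq_univ`).

Fix the initial positions. In a window of `2m` rounds every agent leaves the center at least `m`
times, at times determined by the parity of its initial position, and each time moves to an
independent uniform leaf. A given leaf is therefore missed by all `a` agents with probability at
most `(1 - 1/n) ^ (m a)` (`sum_missed_le`). A union bound over leaves and windows
(`vxProbLe_star_ge`) gives failure probability at most `2 n (1 - 1/n) ^ (m a) ≤ 2 n exp (-m a / n)`,
which is at most `n ^ (-lam)` for `m = ⌊c log n⌋` with `c = 2 (lam + 2) / α`.
-/

open Finset
open scoped Classical ENNReal

noncomputable section

namespace Rumor

variable {V : Type*} {A : Type*}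

/-- Probability weight of `u` as a uniformly random neighbor of `v` in `G`
(`1/deg v` if `u` is a neighbor of `v`, and `0` otherwise). -/
def nbrW [Fintype V] (G : SimpleGraph V) (v u : V) : ℝ :=
  if G.Adj v u then 1 / (G.degree v : ℝ) else 0

/-- Probability weight of a lazy simple random walk step from `v` to `u`
(stay put with probability `1/2`, otherwise move to a uniform neighbor). -/
def lazyW [Fintype V] (G : SimpleGraph V) (v u : V) : ℝ :=
  if u = v then 1 / 2 else if G.Adj v u then 1 / (2 * (G.degree v : ℝ)) else 0

/-- Stationary distribution of the simple random walk on `G`: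
vertex `v` has probability `deg v / (2 |E|)`. -/
def statW [Fintype V] (G : SimpleGraph V) (v : V) : ℝ :=
  (G.degree v : ℝ) / ∑ u : V, (G.degree u : ℝ)

/-- Informed vertices of the PUSH protocol with source `s` after `t` rounds,
when in round `t+1` each vertex `u` sends the rumor to the vertex `σ t u`. -/
def pushInf (s : V) (σ : ℕ → V → V) : ℕ → Set V
  | 0 => {s}
  | t + 1 => pushInf s σ t ∪ (σ t) '' pushInf s σ t

/-- Informed vertices of the PUSH-PULL protocol with source `s` after `t` rounds,
when in round `t+1` each vertex `u` contacts the vertex `σ t u`. -/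
def ppullInf (s : V) (σ : ℕ → V → V) : ℕ → Set V
  | 0 => {s}
  | t + 1 => ppullInf s σ t ∪ (σ t) '' ppullInf s σ t ∪ {v | σ t v ∈ ppullInf s σ t}

/-- Extend finite-horizon driving noise to all times (by the identity). -/
def extV {k : ℕ} (σ : Fin k → V → V) : ℕ → V → V :=
  fun t => if h : t < k then σ ⟨t, h⟩ else id

/-- `P[T_push(G,s) ≤ k]`: the probability that all vertices are informed within `k`
rounds of the PUSH protocol on `G` with source `s`, where in each round every vertex
samples an independent uniformly random neighbor. -/
def pushProbLe [Fintype V] (G : SimpleGraph V) (s : V) (k : ℕ) : ℝ :=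
  ∑ σ : Fin k → V → V,
    if pushInf s (extV σ) k = Set.univ then ∏ t : Fin k, ∏ v : V, nbrW G v (σ t v) else 0

/-- `P[T_ppull(G,s) ≤ k]` for the PUSH-PULL protocol. -/
def ppullProbLe [Fintype V] (G : SimpleGraph V) (s : V) (k : ℕ) : ℝ :=
  ∑ σ : Fin k → V → V,
    if ppullInf s (extV σ) k = Set.univ then ∏ t : Fin k, ∏ v : V, nbrW G v (σ t v) else 0

/-- Position after `t` steps of the walk of agent `g`, started at `x0 g`, where at
round `t+1` the agent moves from its current position `v` to `σ t g v`. -/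
def walk (x0 : A → V) (σ : ℕ → A → V → V) (g : A) : ℕ → V
  | 0 => x0 g
  | t + 1 => σ t g (walk x0 σ g t)

/-- Extend finite-horizon driving noise for the agents to all times. -/
def extAV {k : ℕ} (σ : Fin k → A → V → V) : ℕ → A → V → V :=
  fun t => if h : t < k then σ ⟨t, h⟩ else fun _ => id

/-- Probability of the event `E` on the trajectories (up to time `k`) of independent
simple random walks on `G`, one for each agent in `A`, each started from an independent
sample of the stationary distribution. -/
def walksProb [Fintype V] [Fintype A] (G : SimpleGraph V) (k : ℕ)
    (E : (A → ℕ → V) → Prop) : ℝ :=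
  ∑ x0 : A → V, ∑ σ : Fin k → A → V → V,
    if E (walk x0 (extAV σ)) then
      (∏ g : A, statW G (x0 g)) * ∏ t : Fin k, ∏ g : A, ∏ v : V, nbrW G v (σ t g v)
    else 0

/-- Probability of the event `E` on the trajectories (up to time `k`) of independent
*lazy* simple random walks on `G`, one for each agent in `A`, each started from an
independent sample of the stationary distribution. -/
def walksLazyProb [Fintype V] [Fintype A] (G : SimpleGraph V) (k : ℕ)
    (E : (A → ℕ → V) → Prop) : ℝ :=
  ∑ x0 : A → V, ∑ σ : Fin k → A → V → V,
    if E (walk x0 (extAV σ)) then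
      (∏ g : A, statW G (x0 g)) * ∏ t : Fin k, ∏ g : A, ∏ v : V, lazyW G v (σ t g v)
    else 0

/-- The pair (informed vertices, informed agents) of VISIT-EXCHANGE with source `s`
after `t` rounds, given agent trajectories `x`. -/
def vxInf (s : V) (x : A → ℕ → V) : ℕ → Set V × Set A
  | 0 => ({s}, {g | x g 0 = s})
  | t + 1 =>
      let p := vxInf s x t
      (p.1 ∪ {v | ∃ g ∈ p.2, x g (t + 1) = v},
       p.2 ∪ {g | x g (t + 1) ∈ p.1 ∪ {v | ∃ g' ∈ p.2, x g' (t + 1) = v}})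

/-- `P[T_visitx(G,s) ≤ k]`: probability that all vertices are informed within `k` rounds
of VISIT-EXCHANGE on `G` with source `s` and `a` agents. -/
def vxProbLe [Fintype V] (G : SimpleGraph V) (s : V) (a k : ℕ) : ℝ :=
  walksProb (A := Fin a) G k fun x => (vxInf s x k).1 = Set.univ

/-- The pair (informed agents, "the source has already informed some agent") of
MEET-EXCHANGE with source `s` after `t` rounds, given agent trajectories `x`. -/
def mxInf (s : V) (x : A → ℕ → V) : ℕ → Set A × Prop
  | 0 => ({g | x g 0 = s}, ∃ g, x g 0 = s)
  | t + 1 =>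
      let p := mxInf s x t
      (p.1 ∪ {g | ∃ g' ∈ p.1, x g' (t + 1) = x g (t + 1)} ∪ {g | ¬p.2 ∧ x g (t + 1) = s},
       p.2 ∨ ∃ g, x g (t + 1) = s)

/-- `P[T_meetx(G,s) ≤ k]`: probability that all agents are informed within `k` rounds of
MEET-EXCHANGE on `G` with source `s` and `a` agents (non-lazy walks). -/
def mxProbLe [Fintype V] (G : SimpleGraph V) (s : V) (a k : ℕ) : ℝ :=
  walksProb (A := Fin a) G k fun x => (mxInf s x k).1 = Set.univ

/-- `P[T_meetx(G,s) ≤ k]` for MEET-EXCHANGE with lazy walks. -/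
def mxLazyProbLe [Fintype V] (G : SimpleGraph V) (s : V) (a k : ℕ) : ℝ :=
  walksLazyProb (A := Fin a) G k fun x => (mxInf s x k).1 = Set.univ

/-- `E[T_push(G,s)] = ∑_{k≥0} P[T_push > k]`. -/
def pushET [Fintype V] (G : SimpleGraph V) (s : V) : ℝ≥0∞ :=
  ∑' k : ℕ, ENNReal.ofReal (1 - pushProbLe G s k)

/-- `E[T_ppull(G,s)] = ∑_{k≥0} P[T_ppull > k]`. -/
def ppullET [Fintype V] (G : SimpleGraph V) (s : V) : ℝ≥0∞ :=
  ∑' k : ℕ, ENNReal.ofReal (1 - ppullProbLe G s k)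

/-- `E[T_visitx(G,s)] = ∑_{k≥0} P[T_visitx > k]` with `a` agents. -/
def vxET [Fintype V] (G : SimpleGraph V) (s : V) (a : ℕ) : ℝ≥0∞ :=
  ∑' k : ℕ, ENNReal.ofReal (1 - vxProbLe G s a k)

/-- `E[T_meetx(G,s)] = ∑_{k≥0} P[T_meetx > k]` with `a` agents. -/
def mxET [Fintype V] (G : SimpleGraph V) (s : V) (a : ℕ) : ℝ≥0∞ :=
  ∑' k : ℕ, ENNReal.ofReal (1 - mxProbLe G s a k)

end Rumor

/-- The star graph `S_n`: one center adjacent to `n` leaves. -/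
def starG (n : ℕ) : SimpleGraph (Fin 1 ⊕ Fin n) := completeBipartiteGraph (Fin 1) (Fin n)

/-! ### Deterministic part -/

section Deterministic

open Rumor

variable {V A : Type*}

lemma vxInf_fst_mono (s : V) (x : A → ℕ → V) : Monotone fun t => (vxInf s x t).1 :=
  monotone_nat_of_le_succ fun _ => Set.subset_union_left

lemma vxInf_agent_of_vertex (s : V) (x : A → ℕ → V) (g : A) (t : ℕ)
    (h : x g t ∈ (vxInf s x t).1) : g ∈ (vxInf s x t).2 := by
  cases t with
  | zero => simpa [vxInf] using h
  | succ t => exact Or.inr h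

lemma vxInf_vertex_of_agent (s : V) (x : A → ℕ → V) (g : A) (t : ℕ)
    (h : g ∈ (vxInf s x t).2) : x g (t + 1) ∈ (vxInf s x (t + 1)).1 :=
  Or.inr ⟨g, h, rfl⟩

lemma vxInf_agent_mono (s : V) (x : A → ℕ → V) : Monotone fun t => (vxInf s x t).2 :=
  monotone_nat_of_le_succ fun _ => Set.subset_union_left

/-- If every leaf is visited during the rounds `1, …, 2m` and again during the rounds
`2m+3, …, 4m+2`, then the star is fully informed: the visit to the source (if it is a leaf) puts
the rumor at the center by round `2m+1`, hence in all agents by round `2m+2`, and the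
second series of visits informs all leaves. -/
lemma vxInf_eq_univ {n m k : ℕ} (hk : 4 * m + 2 ≤ k) (s : Fin 1 ⊕ Fin n)
    (x : A → ℕ → Fin 1 ⊕ Fin n)
    (hadj : ∀ g t, t < k → (starG n).Adj (x g t) (x g (t + 1)))
    (h1 : ∀ v : Fin n, ∃ g t, t < 2 * m ∧ x g (t + 1) = Sum.inr v)
    (h2 : ∀ v : Fin n, ∃ g t, 2 * m + 2 ≤ t ∧ t < 4 * m + 2 ∧ x g (t + 1) = Sum.inr v) :
    (vxInf s x k).1 = Set.univ := by
  have hcenter : (Sum.inl 0 : Fin 1 ⊕ Fin n) ∈ (vxInf s x (2 * m + 1)).1 := by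
    rcases s with c | v
    · refine vxInf_fst_mono (Sum.inl c) x (Nat.zero_le _) ?_
      simp [vxInf, Subsingleton.elim c 0]
    · obtain ⟨g, t, ht, hx⟩ := h1 v
      have ha : g ∈ (vxInf (Sum.inr v) x (t + 1)).2 := by
        refine vxInf_agent_of_vertex _ _ _ _ ?_
        rw [hx]
        exact vxInf_fst_mono (Sum.inr v) x (Nat.zero_le _) (by simp [vxInf])
      have hv := vxInf_vertex_of_agent _ _ _ _ ha
      have hs := hadj g (t + 1) (by omega)
      rw [hx] at hs
      have hc : x g (t + 1 + 1) = Sum.inl 0 := by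
        rcases hxx : x g (t + 1 + 1) with c | w
        · rw [Subsingleton.elim c 0]
        · rw [hxx] at hs
          simp [starG] at hs
      rw [hc] at hv
      exact vxInf_fst_mono (Sum.inr v) x (by omega) hv
  have hagents : ∀ g, g ∈ (vxInf s x (2 * m + 2)).2 := by
    intro g
    have hs : (starG n).Adj (x g (2 * m + 1)) (x g (2 * m + 2)) := hadj g _ (by omega)
    rcases hx : x g (2 * m + 1) with c | w
    · refine vxInf_agent_mono s x (by omega : 2 * m + 1 ≤ 2 * m + 2) ?_
      refine vxInf_agent_of_vertex _ _ _ _ ?_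
      rwa [hx, Subsingleton.elim c 0]
    · refine vxInf_agent_of_vertex _ _ _ _ ?_
      rcases hx' : x g (2 * m + 2) with c | w'
      · rw [Subsingleton.elim c 0]
        exact vxInf_fst_mono s x (by omega : 2 * m + 1 ≤ 2 * m + 2) hcenter
      · rw [hx, hx'] at hs
        simp [starG] at hs
  refine Set.eq_univ_of_forall fun u => ?_
  rcases u with c | v
  · rw [Subsingleton.elim c 0]
    exact vxInf_fst_mono s x (by omega) hcenter
  · obtain ⟨g, t, ht, ht', hx⟩ := h2 v
    have := vxInf_vertex_of_agent s x g t (vxInf_agent_mono s x ht (hagents g))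
    rw [hx] at this
    exact vxInf_fst_mono s x (by omega) this

end Deterministic

/-! ### The walks on the star -/

section Walks

open Rumor

variable {A : Type*}

/-- The parity of the times at which a walk on the star that starts at `v` is at the center. -/
def startPar {n : ℕ} (v : Fin 1 ⊕ Fin n) : ℕ := Sum.elim (fun _ => 0) (fun _ => 1) v

/-- The driving noise `σ` uses only edges of the star. -/
def NoiseOk {n k : ℕ} (σ : Fin k → A → (Fin 1 ⊕ Fin n) → (Fin 1 ⊕ Fin n)) : Prop :=
  ∀ t g v, (starG n).Adj v (σ t g v)

lemma walk_adj {n k : ℕ} (x0 : A → Fin 1 ⊕ Fin n)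
    (σ : Fin k → A → (Fin 1 ⊕ Fin n) → (Fin 1 ⊕ Fin n)) (hσ : NoiseOk σ)
    (g : A) (t : ℕ) (ht : t < k) :
    (starG n).Adj (walk x0 (extAV σ) g t) (walk x0 (extAV σ) g (t + 1)) := by
  simp only [walk, extAV, ht, dif_pos]
  exact hσ _ _ _

/-- The walk is periodic: it is at the center exactly at the times of parity `startPar`. -/
lemma walk_parity {n k : ℕ} (x0 : A → Fin 1 ⊕ Fin n)
    (σ : Fin k → A → (Fin 1 ⊕ Fin n) → (Fin 1 ⊕ Fin n)) (hσ : NoiseOk σ)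
    (g : A) (t : ℕ) (ht : t ≤ k) :
    startPar (walk x0 (extAV σ) g t) = (t + startPar (x0 g)) % 2 := by
  induction t with
  | zero => rcases h : x0 g <;> simp [walk, h, startPar]
  | succ t ih =>
    have ih := ih (by omega)
    have h := walk_adj x0 σ hσ g t (by omega)
    rcases h1 : walk x0 (extAV σ) g t with c | v <;>
    rcases h2 : walk x0 (extAV σ) g (t + 1) with c' | v' <;>
    rw [h1] at ih h <;> rw [h2] at h <;> simp [startPar, starG] at ih h ⊢ <;> omega

lemma walk_succ_of_center {n k : ℕ} (x0 : A → Fin 1 ⊕ Fin n)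
    (σ : Fin k → A → (Fin 1 ⊕ Fin n) → (Fin 1 ⊕ Fin n)) (hσ : NoiseOk σ)
    (g : A) (t : Fin k) (ht : (t + startPar (x0 g)) % 2 = 0) :
    walk x0 (extAV σ) g (t + 1) = σ t g (Sum.inl 0) := by
  have h := walk_parity x0 σ hσ g t t.2.le
  rw [ht] at h
  have hc : walk x0 (extAV σ) g t = Sum.inl 0 := by
    rcases h1 : walk x0 (extAV σ) g t with c | v
    · rw [Subsingleton.elim c 0]
    · rw [h1] at h
      simp [startPar] at h
  simp only [walk, hc]
  simp [extAV]

/-- In round `t + 1`, with `b ≤ t < b + 2m`, an agent with initial vertex `v0` leaves the center. -/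
def Active {n : ℕ} (m b : ℕ) (v0 : Fin 1 ⊕ Fin n) (t : ℕ) : Prop :=
  b ≤ t ∧ t < b + 2 * m ∧ (t + startPar v0) % 2 = 0

/-- A window of `2m` rounds starting at an even time contains (at least) `m` rounds in which a
given agent leaves the center. -/
lemma le_card_active {n k : ℕ} (m b : ℕ) (hb : Even b) (hk : b + 2 * m ≤ k)
    (v0 : Fin 1 ⊕ Fin n) : m ≤ #{t : Fin k | Active m b v0 t} := by
  have hp : startPar v0 ≤ 1 := by rcases v0 with _ | _ <;> simp [startPar]
  have h := Finset.card_le_card_of_injOn (s := (Finset.univ : Finset (Fin m)))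
    (t := ({t : Fin k | Active m b v0 t} : Finset (Fin k)))
    (fun j => ⟨b + 2 * j + startPar v0, by omega⟩) ?_ ?_
  · simpa using h
  · intro j _
    obtain ⟨c, rfl⟩ := hb
    refine Finset.mem_coe.mpr (Finset.mem_filter.mpr ⟨Finset.mem_univ _, ?_, ?_, ?_⟩) <;>
    dsimp only <;> omega
  · intro i _ j _ hij
    simp only [Fin.mk.injEq] at hij
    exact Fin.ext (by omega)

end Walks

/-! ### Sums over the driving noise -/

section Sums

open Rumor

lemma sum_noise_prod {T A V : Type*} [Fintype T] [Fintype A] [Fintype V]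
    [DecidableEq T] [DecidableEq A] [DecidableEq V]
    (F : T → A → V → V → ℝ) :
    ∑ σ : T → A → V → V, ∏ t, ∏ g, ∏ v, F t g v (σ t g v)
      = ∏ t, ∏ g, ∏ v, ∑ u, F t g v u := by
  have h3 : ∀ t g, ∏ v, ∑ u, F t g v u = ∑ f : V → V, ∏ v, F t g v (f v) := fun t g => by
    rw [Finset.prod_univ_sum, Fintype.piFinset_univ]
  have h2 : ∀ t, ∏ g, ∑ f : V → V, ∏ v, F t g v (f v)
      = ∑ f : A → V → V, ∏ g, ∏ v, F t g v (f g v) := fun t => by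
    rw [Finset.prod_univ_sum, Fintype.piFinset_univ]
  simp_rw [h3, h2]
  rw [Finset.prod_univ_sum, Fintype.piFinset_univ]

lemma nbrW_nonneg {V : Type*} [Fintype V] (G : SimpleGraph V) (v u : V) : 0 ≤ nbrW G v u := by
  unfold nbrW
  split_ifs <;> positivity

lemma statW_nonneg {V : Type*} [Fintype V] (G : SimpleGraph V) (v : V) : 0 ≤ statW G v := by
  unfold statW
  positivity

lemma sum_nbrW {V : Type*} [Fintype V] (G : SimpleGraph V) (v : V) (h : G.degree v ≠ 0) :
    ∑ u, nbrW G v u = 1 := by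
  unfold nbrW
  rw [← Finset.sum_filter, Finset.sum_const, ← SimpleGraph.neighborFinset_eq_filter,
    SimpleGraph.card_neighborFinset_eq_degree, nsmul_eq_mul]
  field_simp

lemma starG_degree_center (n : ℕ) : (starG n).degree (Sum.inl 0) = n := by
  rw [← SimpleGraph.card_neighborFinset_eq_degree, SimpleGraph.neighborFinset_eq_filter]
  have : ({w | (starG n).Adj (Sum.inl 0) w} : Finset (Fin 1 ⊕ Fin n))
      = Finset.univ.map Function.Embedding.inr := by
    ext w
    rcases w with c | v <;> simp [starG]
  rw [this]
  simp

lemma starG_degree_ne_zero {n : ℕ} (hn : n ≠ 0) (v : Fin 1 ⊕ Fin n) :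
    (starG n).degree v ≠ 0 := by
  have hn' : 0 < n := Nat.pos_of_ne_zero hn
  rw [← Nat.pos_iff_ne_zero, SimpleGraph.degree_pos_iff_exists_adj]
  rcases v with c | v
  · exact ⟨Sum.inr ⟨0, hn'⟩, by simp [starG]⟩
  · exact ⟨Sum.inl 0, by simp [starG]⟩

lemma sum_statW_star {n : ℕ} (hn : n ≠ 0) : ∑ v, statW (starG n) v = 1 := by
  unfold statW
  rw [← Finset.sum_div]
  refine div_self (ne_of_gt (Finset.sum_pos (fun v _ => ?_) ⟨Sum.inl 0, Finset.mem_univ _⟩))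
  exact_mod_cast Nat.pos_of_ne_zero (starG_degree_ne_zero hn v)

/-- The weight of the noise `σ`. -/
def noiseW {A : Type*} [Fintype A] {n k : ℕ}
    (σ : Fin k → A → (Fin 1 ⊕ Fin n) → (Fin 1 ⊕ Fin n)) : ℝ :=
  ∏ t, ∏ g, ∏ v, nbrW (starG n) v (σ t g v)

lemma noiseW_nonneg {A : Type*} [Fintype A] {n k : ℕ}
    (σ : Fin k → A → (Fin 1 ⊕ Fin n) → (Fin 1 ⊕ Fin n)) : 0 ≤ noiseW σ :=
  Finset.prod_nonneg fun _ _ => Finset.prod_nonneg fun _ _ =>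
    Finset.prod_nonneg fun _ _ => nbrW_nonneg _ _ _

lemma sum_noiseW {A : Type*} [Fintype A] [DecidableEq A] {n : ℕ} (k : ℕ) (hn : n ≠ 0) :
    ∑ σ : Fin k → A → (Fin 1 ⊕ Fin n) → (Fin 1 ⊕ Fin n), noiseW σ = 1 := by
  unfold noiseW
  rw [sum_noise_prod (fun _ _ v u => nbrW (starG n) v u)]
  simp [sum_nbrW _ _ (starG_degree_ne_zero hn _)]

lemma noiseOk_of_noiseW_ne_zero {A : Type*} [Fintype A] {n k : ℕ}
    (σ : Fin k → A → (Fin 1 ⊕ Fin n) → (Fin 1 ⊕ Fin n)) (h : noiseW σ ≠ 0) : NoiseOk σ := by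
  intro t g v
  by_contra hadj
  refine h (Finset.prod_eq_zero (Finset.mem_univ t) (Finset.prod_eq_zero (Finset.mem_univ g)
    (Finset.prod_eq_zero (Finset.mem_univ v) ?_)))
  simp [nbrW, hadj]

/-- The event that no agent is sent from the center to the leaf `v` in the window of `2m` rounds
starting at `b`. -/
def Missed {A : Type*} {n k : ℕ} (m b : ℕ) (x0 : A → Fin 1 ⊕ Fin n) (v : Fin n)
    (σ : Fin k → A → (Fin 1 ⊕ Fin n) → (Fin 1 ⊕ Fin n)) : Prop :=
  ∀ (t : Fin k) g, Active m b (x0 g) t → σ t g (Sum.inl 0) ≠ Sum.inr v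

/-- Conditionally on the initial positions, a given leaf is missed during a window of `2m` rounds
with probability at most `(1 - 1/n) ^ (m |A|)`. -/
lemma sum_missed_le {A : Type*} [Fintype A] [DecidableEq A] {n k m b : ℕ} (hn : n ≠ 0)
    (hb : Even b) (hk : b + 2 * m ≤ k) (x0 : A → Fin 1 ⊕ Fin n) (v : Fin n) :
    ∑ σ : Fin k → A → (Fin 1 ⊕ Fin n) → (Fin 1 ⊕ Fin n),
      (if Missed m b x0 v σ then noiseW σ else 0)
      ≤ (1 - 1 / (n : ℝ)) ^ (m * Fintype.card A) := by
  set F : Fin k → A → (Fin 1 ⊕ Fin n) → (Fin 1 ⊕ Fin n) → ℝ := fun t g w u =>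
    if Active m b (x0 g) t ∧ w = Sum.inl 0 ∧ u = Sum.inr v then 0 else nbrW (starG n) w u with hF
  have hpt : ∀ σ : Fin k → A → (Fin 1 ⊕ Fin n) → (Fin 1 ⊕ Fin n),
      (if Missed m b x0 v σ then noiseW σ else 0) = ∏ t, ∏ g, ∏ w, F t g w (σ t g w) := by
    intro σ
    split_ifs with h
    · unfold noiseW
      refine Finset.prod_congr rfl fun t _ => Finset.prod_congr rfl fun g _ =>
        Finset.prod_congr rfl fun w _ => ?_
      rw [hF]
      dsimp only
      rw [if_neg]
      rintro ⟨ha, rfl, hu⟩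
      exact h t g ha hu
    · unfold Missed at h
      push Not at h
      obtain ⟨t, g, ha, hu⟩ := h
      refine (Finset.prod_eq_zero (Finset.mem_univ t) (Finset.prod_eq_zero (Finset.mem_univ g)
        (Finset.prod_eq_zero (Finset.mem_univ (Sum.inl 0)) ?_))).symm
      simp [hF, ha, hu]
  have hsum : ∀ t g w, ∑ u, F t g w u
      = if w = Sum.inl 0 then (if Active m b (x0 g) t then 1 - 1 / (n : ℝ) else 1) else 1 := by
    intro t g w
    have htot := sum_nbrW (starG n) w (starG_degree_ne_zero hn w)
    by_cases hw : w = Sum.inl 0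
    · subst hw
      by_cases ha : Active m b (x0 g) t
      · have hv : nbrW (starG n) (Sum.inl 0) (Sum.inr v) = 1 / (n : ℝ) := by
          unfold nbrW
          rw [starG_degree_center, if_pos (by simp [starG])]
        rw [if_pos rfl, if_pos ha, ← hv, ← htot,
          ← Finset.sum_erase_eq_sub (Finset.mem_univ (Sum.inr v)),
          ← Finset.add_sum_erase _ _ (Finset.mem_univ (Sum.inr v))]
        have h0 : F t g (Sum.inl 0) (Sum.inr v) = 0 := by simp [hF, ha]
        rw [h0, zero_add]
        refine Finset.sum_congr rfl fun u hu => ?_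
        simp [hF, Finset.ne_of_mem_erase hu]
      · simpa [hF, ha] using htot
    · simpa [hF, hw] using htot
  have h01 : 0 ≤ 1 - 1 / (n : ℝ) := by
    have : (1 : ℝ) ≤ n := by exact_mod_cast Nat.one_le_iff_ne_zero.mpr hn
    rw [sub_nonneg]
    exact div_le_one_of_le₀ this (by positivity)
  have h11 : 1 - 1 / (n : ℝ) ≤ 1 := by
    have : 0 ≤ 1 / (n : ℝ) := by positivity
    linarith
  rw [Finset.sum_congr rfl fun σ _ => hpt σ, sum_noise_prod F]
  simp_rw [hsum, Finset.prod_ite_eq' Finset.univ, Finset.mem_univ, if_true]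
  rw [Finset.prod_comm, pow_mul]
  calc ∏ g : A, ∏ t : Fin k, (if Active m b (x0 g) t then 1 - 1 / (n : ℝ) else 1)
      ≤ ∏ _g : A, (1 - 1 / (n : ℝ)) ^ m := by
        refine Finset.prod_le_prod (fun g _ => Finset.prod_nonneg fun t _ => ?_) fun g _ => ?_
        · split_ifs <;> linarith
        · rw [Finset.prod_ite, Finset.prod_const, Finset.prod_const_one, mul_one]
          exact pow_le_pow_of_le_one h01 h11 (le_card_active m b hb hk (x0 g))
    _ = _ := by simp

end Sums

/-! ### The probability bound -/

section Bound

open Rumor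

/-- If no leaf is missed in the two windows starting at `0` and at `2m + 2`, the protocol has
finished by round `k`. -/
lemma exists_missed {A : Type*} {n m k : ℕ} (hk : 4 * m + 2 ≤ k) (s : Fin 1 ⊕ Fin n)
    (x0 : A → Fin 1 ⊕ Fin n) (σ : Fin k → A → (Fin 1 ⊕ Fin n) → (Fin 1 ⊕ Fin n))
    (hσ : NoiseOk σ) (hfail : (vxInf s (walk x0 (extAV σ)) k).1 ≠ Set.univ) :
    ∃ v : Fin n, Missed m 0 x0 v σ ∨ Missed m (2 * m + 2) x0 v σ := by
  by_contra! hcon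
  refine hfail (vxInf_eq_univ hk s _ (walk_adj x0 σ hσ) (fun v => ?_) fun v => ?_)
  · have h := (hcon v).1
    unfold Missed at h
    push Not at h
    obtain ⟨t, g, ⟨_, h1, h2⟩, hv⟩ := h
    exact ⟨g, t, by omega, by rw [walk_succ_of_center x0 σ hσ g t h2, hv]⟩
  · have h := (hcon v).2
    unfold Missed at h
    push Not at h
    obtain ⟨t, g, ⟨h0, h1, h2⟩, hv⟩ := h
    exact ⟨g, t, h0, by omega, by rw [walk_succ_of_center x0 σ hσ g t h2, hv]⟩

/-- Union bound over the leaves and the two windows. -/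
lemma vxProbLe_star_ge {n m k a : ℕ} (hn : n ≠ 0) (hk : 4 * m + 2 ≤ k) (s : Fin 1 ⊕ Fin n) :
    1 - 2 * (n : ℝ) * (1 - 1 / (n : ℝ)) ^ (m * a) ≤ vxProbLe (starG n) s a k := by
  set q : ℝ := (1 - 1 / (n : ℝ)) ^ (m * a) with hq
  have hcond : ∀ x0 : Fin a → Fin 1 ⊕ Fin n, 1 - 2 * (n : ℝ) * q ≤
      ∑ σ : Fin k → Fin a → (Fin 1 ⊕ Fin n) → (Fin 1 ⊕ Fin n),
        if (vxInf s (walk x0 (extAV σ)) k).1 = Set.univ then noiseW σ else 0 := by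
    intro x0
    have hpt : ∀ σ : Fin k → Fin a → (Fin 1 ⊕ Fin n) → (Fin 1 ⊕ Fin n),
        noiseW σ - ∑ v : Fin n, ((if Missed m 0 x0 v σ then noiseW σ else 0)
            + (if Missed m (2 * m + 2) x0 v σ then noiseW σ else 0))
          ≤ if (vxInf s (walk x0 (extAV σ)) k).1 = Set.univ then noiseW σ else 0 := by
      intro σ
      have h0 := noiseW_nonneg σ
      have hterm : ∀ v ∈ (Finset.univ : Finset (Fin n)),
          0 ≤ (if Missed m 0 x0 v σ then noiseW σ else 0)
            + (if Missed m (2 * m + 2) x0 v σ then noiseW σ else 0) := fun v _ => by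
        split_ifs <;> linarith
      have hsum := Finset.sum_nonneg hterm
      split_ifs with h
      · linarith
      · by_cases hz : noiseW σ = 0
        · rw [hz] at hsum ⊢
          linarith
        · obtain ⟨v, hv⟩ := exists_missed hk s x0 σ (noiseOk_of_noiseW_ne_zero σ hz) h
          have h1 := Finset.single_le_sum hterm (Finset.mem_univ v)
          have h2 : noiseW σ ≤ (if Missed m 0 x0 v σ then noiseW σ else 0)
            + (if Missed m (2 * m + 2) x0 v σ then noiseW σ else 0) := by
            rcases hv with hv | hv <;> simp only [hv, if_true] <;> split_ifs <;> linarith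
          linarith
    refine le_trans ?_ (Finset.sum_le_sum fun σ _ => hpt σ)
    rw [Finset.sum_sub_distrib, sum_noiseW k hn, Finset.sum_comm]
    have hv : ∀ v ∈ (Finset.univ : Finset (Fin n)),
        ∑ σ : Fin k → Fin a → (Fin 1 ⊕ Fin n) → (Fin 1 ⊕ Fin n),
          ((if Missed m 0 x0 v σ then noiseW σ else 0)
            + (if Missed m (2 * m + 2) x0 v σ then noiseW σ else 0)) ≤ 2 * q := by
      intro v _
      rw [Finset.sum_add_distrib]
      have h1 := sum_missed_le (k := k) (m := m) (b := 0) hn (by simp) (by omega) x0 v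
      have h2 := sum_missed_le (k := k) (m := m) (b := 2 * m + 2) hn ⟨m + 1, by ring⟩
        (by omega) x0 v
      rw [Fintype.card_fin] at h1 h2
      linarith
    have := Finset.sum_le_sum hv
    rw [Finset.sum_const, Finset.card_univ, Fintype.card_fin, nsmul_eq_mul] at this
    linarith
  have hx0 : ∑ x0 : Fin a → Fin 1 ⊕ Fin n, ∏ g, statW (starG n) (x0 g) = 1 := by
    have h := Finset.prod_univ_sum (fun _ : Fin a => (Finset.univ : Finset (Fin 1 ⊕ Fin n)))
      (fun _ v => statW (starG n) v)
    rw [Fintype.piFinset_univ] at h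
    rw [← h]
    simp [sum_statW_star hn]
  calc 1 - 2 * (n : ℝ) * q
      = ∑ x0 : Fin a → Fin 1 ⊕ Fin n, (∏ g, statW (starG n) (x0 g)) * (1 - 2 * (n : ℝ) * q) := by
        rw [← Finset.sum_mul, hx0, one_mul]
    _ ≤ ∑ x0 : Fin a → Fin 1 ⊕ Fin n, (∏ g, statW (starG n) (x0 g)) *
          ∑ σ : Fin k → Fin a → (Fin 1 ⊕ Fin n) → (Fin 1 ⊕ Fin n),
            if (vxInf s (walk x0 (extAV σ)) k).1 = Set.univ then noiseW σ else 0 :=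
        Finset.sum_le_sum fun x0 _ => mul_le_mul_of_nonneg_left (hcond x0)
          (Finset.prod_nonneg fun _ _ => statW_nonneg _ _)
    _ = vxProbLe (starG n) s a k := by
        unfold vxProbLe walksProb
        -- The two sums differ only in the decidability instances behind `Finset.univ`.
        refine Finset.sum_congr (by ext; simp) fun x0 _ => ?_
        rw [Finset.mul_sum]
        refine Finset.sum_congr (by ext; simp) fun σ _ => ?_
        rw [mul_ite, mul_zero]
        rfl

end Bound

/-- For any constants `α, λ > 0` there are `C` and `n₀` such that for
all `n ≥ n₀` and every source `s` of the star `S_n`, VISIT-EXCHANGE with `⌊α n⌋` agents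
satisfies `P[T_visitx(S_n, s) ≤ C log n] ≥ 1 − n^{−λ}`. -/
theorem star_visitx_fast (α lam : ℝ) (hα : 0 < α) (hlam : 0 < lam) :
    ∃ C : ℝ, ∃ n₀ : ℕ, ∀ n : ℕ, n₀ ≤ n → ∀ s : Fin 1 ⊕ Fin n,
      1 - (n : ℝ) ^ (-lam)
        ≤ Rumor.vxProbLe (starG n) s ⌊α * n⌋₊ ⌊C * Real.log n⌋₊ := by
  -- The decay rate `α c / 2 = lam + 2` beats the factor `2 n` of the union bound.
  set c : ℝ := 2 * (lam + 2) / α with hc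
  have hc0 : 0 < c := by positivity
  obtain ⟨N, hN⟩ := exists_nat_ge (2 / α + 3 + 2 * Real.exp (α / 2))
  refine ⟨4 * c + 2, N, fun n hn s => ?_⟩
  have hnN : 2 / α + 3 + 2 * Real.exp (α / 2) ≤ n := hN.trans (by exact_mod_cast hn)
  have hα2 : 0 < 2 / α := by positivity
  have hexp := Real.exp_pos (α / 2)
  have hn3 : (3 : ℝ) ≤ n := by linarith
  have hnpos : (0 : ℝ) < n := by linarith
  have hn0 : n ≠ 0 := by rintro rfl; simp at hnpos
  have hlog : 1 ≤ Real.log n := by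
    rw [Real.le_log_iff_exp_le hnpos]
    linarith [Real.exp_one_lt_d9]
  set m : ℕ := ⌊c * Real.log n⌋₊ with hm
  have hmle : (m : ℝ) ≤ c * Real.log n := Nat.floor_le (by positivity)
  have hmge : c * Real.log n - 1 ≤ m := (Nat.sub_one_lt_floor _).le
  have hk : 4 * m + 2 ≤ ⌊(4 * c + 2) * Real.log n⌋₊ := by
    refine Nat.le_floor ?_
    push_cast
    linarith
  have ha : α * n / 2 ≤ (⌊α * n⌋₊ : ℝ) := by
    have h1 := (Nat.sub_one_lt_floor (α * (n : ℝ))).le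
    have h2 : 2 ≤ α * n := by
      have : 2 / α ≤ n := by linarith
      rwa [div_le_iff₀ hα, mul_comm] at this
    linarith
  refine le_trans ?_ (vxProbLe_star_ge hn0 hk s)
  have h01 : 0 ≤ 1 - 1 / (n : ℝ) := by
    rw [sub_nonneg]
    exact div_le_one_of_le₀ (by linarith) hnpos.le
  have hpow : (1 - 1 / (n : ℝ)) ^ (m * ⌊α * n⌋₊)
      ≤ Real.exp (α / 2) * Real.exp (-(lam + 2) * Real.log n) := by
    calc (1 - 1 / (n : ℝ)) ^ (m * ⌊α * n⌋₊)
        ≤ Real.exp (-(1 / (n : ℝ))) ^ (m * ⌊α * n⌋₊) :=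
          pow_le_pow_left₀ h01 (Real.one_sub_le_exp_neg _) _
      _ = Real.exp (-((m : ℝ) * (⌊α * n⌋₊ / n))) := by
          rw [← Real.exp_nat_mul]
          push_cast
          congr 1
          ring
      _ ≤ Real.exp (α / 2 + -(lam + 2) * Real.log n) := by
          refine Real.exp_le_exp.mpr ?_
          have h1 : α / 2 ≤ (⌊α * n⌋₊ : ℝ) / n := by
            rw [le_div_iff₀ hnpos]
            linarith
          have h2 : (m : ℝ) * (α / 2) ≤ m * (⌊α * n⌋₊ / n) :=
            mul_le_mul_of_nonneg_left h1 (Nat.cast_nonneg m)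
          have h3 : (c * Real.log n - 1) * (α / 2) ≤ m * (α / 2) :=
            mul_le_mul_of_nonneg_right hmge (by positivity)
          have h4 : (c * Real.log n - 1) * (α / 2) = (lam + 2) * Real.log n - α / 2 := by
            rw [hc]
            field_simp
          linarith
      _ = _ := Real.exp_add _ _
  have hsplit : Real.exp (-(lam + 2) * Real.log n) = (n : ℝ) ^ (-lam) / (n * n) := by
    have : -(lam + 2) * Real.log n = Real.log n * (-lam) - (Real.log n + Real.log n) := by ring
    rw [this, Real.exp_sub, Real.exp_add, Real.exp_log hnpos, Real.rpow_def_of_pos hnpos]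
  rw [hsplit] at hpow
  have hr : 0 < (n : ℝ) ^ (-lam) := Real.rpow_pos_of_pos hnpos _
  have : 2 * (n : ℝ) * (1 - 1 / (n : ℝ)) ^ (m * ⌊α * n⌋₊) ≤ (n : ℝ) ^ (-lam) := by
    calc 2 * (n : ℝ) * (1 - 1 / (n : ℝ)) ^ (m * ⌊α * n⌋₊)
        ≤ 2 * (n : ℝ) * (Real.exp (α / 2) * ((n : ℝ) ^ (-lam) / (n * n))) :=
          mul_le_mul_of_nonneg_left hpow (by positivity)
      _ = (n : ℝ) ^ (-lam) * (2 * Real.exp (α / 2) / n) := by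
          field_simp
      _ ≤ (n : ℝ) ^ (-lam) * 1 := by
          refine mul_le_mul_of_nonneg_left ?_ hr.le
          rw [div_le_one hnpos]
          linarith
      _ = _ := mul_one _
  linarith
end
end

section
/- For any constants α > 0 and λ > 0 there exist constants C and n₀ such that for all n ≥ n₀ and every source vertex s of the star graph S_n, the meet-exchange protocol with lazy walks and |A| = ⌊α·n⌋ agents satisfies P[T_meetx(S_n, s) ≤ C·log n] ≥ 1 − n^{−λ}. -/
/-!
From any vertex of the star, a lazy step leads to the center with probability exactly `1/2`.
Hence two given agents are together at the center in a given round with probability `1/4`,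
independently of the past, and fail to be so throughout `m` consecutive rounds with probability
`(3/4)^m` (`meet_fail`).

Split the `k = ⌊C log n⌋` rounds into two halves. In the first half some agent visits the source:
a single walk killed at the source contracts the weight `1` at the center, `(1 - 1/(2n))⁻¹` at the
leaves, by a factor `1 - 1/(4n)` per round (`avoid_step`), and the `⌊αn⌋` agents are independent,
so nobody visits the source in `k/2` rounds with probability at most `exp (-Ω(α k))`
(`avoid_fail`, `avoid_numeric`). In the second half, by a union bound over pairs, every two agents
meet at the center, except with probability at most `(αn)² (3/4)^(k/2)` (`meet_numeric`). If both
happen, then an agent informed by the source in the first half meets everybody else in the second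
half, so all agents are informed (`mxInf_univ`). Both failure probabilities are at most
`n^{-λ}/2` for `C` large.

All probabilities are finite weighted sums over the noise; `survival_le` bounds survival
probabilities by functions that are superharmonic backwards in time, and `sum_stepW_prod` is the
independence of the agents in one round.
-/

open Finset
open scoped Classical ENNReal

noncomputable section

namespace StarMeet

open Rumor

/-! ### Random noise and survival probabilities -/

lemma walk_cons {V A : Type*} {k : ℕ} (x0 : A → V) (ω : A → V → V) (σ : Fin k → A → V → V) (g : A) (t : ℕ) :
    walk x0 (extAV (Fin.cons ω σ : Fin (k + 1) → A → V → V)) g (t + 1)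
      = walk (fun g => ω g (x0 g)) (extAV σ) g t := by
  induction t with
  | zero => simp [walk, extAV]
  | succ t ih =>
    rw [walk, ih, walk]
    by_cases h : t < k
    · simp only [extAV, h, Nat.succ_lt_succ_iff, dif_pos]
      rfl
    · simp [extAV, h]

/-- Real-valued indicator of a proposition. -/
def ind (P : Prop) : ℝ := if P then 1 else 0

lemma ind_pos {P : Prop} (h : P) : ind P = 1 := if_pos h

lemma ind_neg {P : Prop} (h : ¬P) : ind P = 0 := if_neg h

lemma ind_nonneg (P : Prop) : 0 ≤ ind P := by
  unfold ind
  split_ifs <;> norm_num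

lemma ind_and (P Q : Prop) : ind (P ∧ Q) = ind P * ind Q := by
  by_cases hP : P <;> by_cases hQ : Q <;> simp [ind, hP, hQ]

lemma ind_not (P : Prop) : ind (¬P) = 1 - ind P := by
  by_cases hP : P <;> simp [ind, hP]

lemma prod_ind {A : Type*} [Fintype A] (P : A → Prop) : ∏ g, ind (P g) = ind (∀ g, P g) := by
  by_cases h : ∀ g, P g
  · simp [ind_pos h, ind_pos (h _)]
  · rw [ind_neg h]
    push Not at h
    obtain ⟨g, hg⟩ := h
    exact prod_eq_zero (mem_univ g) (ind_neg hg)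

section Noise

variable {V A : Type*} [Fintype V] [Fintype A]

/-- Weight of the one-round noise `ω`, under which agent `g` moves from `v` to `ω g v`, for the
transition kernel `p`. -/
def stepW (p : V → V → ℝ) (ω : A → V → V) : ℝ := ∏ g, ∏ v, p v (ω g v)

lemma stepW_nonneg {p : V → V → ℝ} (hp : ∀ v u, 0 ≤ p v u) (ω : A → V → V) :
    0 ≤ stepW p ω :=
  prod_nonneg fun _ _ => prod_nonneg fun _ _ => hp _ _

/-- Only the coordinate of the noise at the current position matters for the next position. -/
lemma sum_noise_eval {p : V → V → ℝ} (hs : ∀ v, ∑ u, p v u = 1) (y : V) (f : V → ℝ) :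
    ∑ η : V → V, (∏ v, p v (η v)) * f (η y) = ∑ u, p y u * f u := by
  have h := Finset.prod_univ_sum (fun _ : V => (univ : Finset V))
    (fun v u => p v u * if v = y then f u else 1)
  rw [Fintype.piFinset_univ] at h
  have h1 : ∀ η : V → V, ∏ v, (p v (η v) * if v = y then f (η v) else 1)
      = (∏ v, p v (η v)) * f (η y) := by
    intro η
    rw [prod_mul_distrib, Finset.prod_ite_eq' univ y (fun v => f (η v))]
    simp
  simp only [h1] at h
  rw [← h, Finset.prod_eq_single y]
  · simp
  · intro v _ hv
    simp [hv, hs]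
  · simp

/-- Independence of the agents: the one-round transition operator maps products over the agents
to products. -/
lemma sum_stepW_prod {p : V → V → ℝ} (hs : ∀ v, ∑ u, p v u = 1) (x : A → V)
    (f : A → V → ℝ) :
    ∑ ω : A → V → V, stepW p ω * ∏ g, f g (ω g (x g)) = ∏ g, ∑ u, p (x g) u * f g u := by
  have h := Finset.prod_univ_sum (fun _ : A => (univ : Finset (V → V)))
    (fun g η => (∏ v, p v (η v)) * f g (η (x g)))
  rw [Fintype.piFinset_univ] at h
  simp only [sum_noise_eval hs] at h
  rw [h]
  exact sum_congr rfl fun ω _ => by rw [stepW, prod_mul_distrib]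

lemma sum_stepW {p : V → V → ℝ} (hs : ∀ v, ∑ u, p v u = 1) :
    ∑ ω : A → V → V, stepW p ω = 1 := by
  have h := Finset.prod_univ_sum (fun _ : A => (univ : Finset (V → V)))
    (fun _ η => (∏ v, p v (η v)))
  have h2 := Finset.prod_univ_sum (fun _ : V => (univ : Finset V)) p
  rw [Fintype.piFinset_univ] at h h2
  rw [← h2] at h
  simp only [hs, prod_const_one] at h
  exact h.symm

lemma sum_noise_cons {k : ℕ} (F : (Fin (k + 1) → A → V → V) → ℝ) :
    ∑ σ, F σ = ∑ ω : A → V → V, ∑ σ : Fin k → A → V → V, F (Fin.cons ω σ) := by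
  rw [← (Fin.consEquiv (fun _ : Fin (k + 1) => A → V → V)).sum_comp, Fintype.sum_prod_type]
  rfl

/-- The probability that the state lies in `Q t` at each round `t = 1, …, k` is at most `U 0 x0`, as
soon as `U` is superharmonic, backwards in time, for the joint walk killed outside `Q`. -/
lemma survival_le {p : V → V → ℝ} (hp : ∀ v u, 0 ≤ p v u) (k : ℕ) :
    ∀ (Q : ℕ → (A → V) → Prop) (U : ℕ → (A → V) → ℝ),
    (∀ x, 1 ≤ U k x) →
    (∀ t < k, ∀ x, ∑ ω : A → V → V, stepW p ω *
      (ind (Q (t + 1) (fun g => ω g (x g))) * U (t + 1) (fun g => ω g (x g))) ≤ U t x) →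
    ∀ x0 : A → V, ∑ σ : Fin k → A → V → V, (∏ t, stepW p (σ t)) *
      ind (∀ t < k, Q (t + 1) (fun g => walk x0 (extAV σ) g (t + 1))) ≤ U 0 x0 := by
  induction k with
  | zero =>
    intro Q U hU _ x0
    simpa [ind] using hU x0
  | succ k ih =>
    intro Q U hU hstep x0
    rw [sum_noise_cons]
    refine le_trans (sum_le_sum fun ω _ => ?_) (hstep 0 (by omega) x0)
    have h := ih (fun t => Q (t + 1)) (fun t => U (t + 1)) hU
      (fun t ht => hstep (t + 1) (by omega)) (fun g => ω g (x0 g))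
    have key : ∀ σ : Fin k → A → V → V,
        (∏ t, stepW p ((Fin.cons ω σ : Fin (k + 1) → A → V → V) t)) *
          ind (∀ t < k + 1, Q (t + 1) (fun g => walk x0
            (extAV (Fin.cons ω σ : Fin (k + 1) → A → V → V)) g (t + 1)))
        = (stepW p ω * ind (Q 1 (fun g => ω g (x0 g)))) *
          ((∏ t, stepW p (σ t)) * ind (∀ t < k, Q (t + 1 + 1)
            (fun g => walk (fun g => ω g (x0 g)) (extAV σ) g (t + 1)))) := by
      intro σ
      have e : (∀ t < k + 1, Q (t + 1) (fun g => walk x0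
            (extAV (Fin.cons ω σ : Fin (k + 1) → A → V → V)) g (t + 1))) ↔
          (Q 1 (fun g => ω g (x0 g)) ∧ ∀ t < k, Q (t + 1 + 1)
            (fun g => walk (fun g => ω g (x0 g)) (extAV σ) g (t + 1))) := by
        simp only [walk_cons]
        constructor
        · intro h
          exact ⟨h 0 (by omega), fun t ht => h (t + 1) (by omega)⟩
        · rintro ⟨h0, h1⟩ t ht
          cases t with
          | zero => exact h0
          | succ t => exact h1 t (by omega)
      rw [e, ind_and, Fin.prod_univ_succ]
      simp only [Fin.cons_zero, Fin.cons_succ]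
      ring
    rw [sum_congr rfl fun σ _ => key σ, ← mul_sum, ← mul_assoc]
    exact mul_le_mul_of_nonneg_left h (mul_nonneg (stepW_nonneg hp ω) (ind_nonneg _))

lemma sum_noise {p : V → V → ℝ} (hs : ∀ v, ∑ u, p v u = 1) (k : ℕ) :
    ∑ σ : Fin k → A → V → V, ∏ t, stepW p (σ t) = 1 := by
  have h := Finset.prod_univ_sum (fun _ : Fin k => (univ : Finset (A → V → V)))
    (fun _ ω => stepW p ω)
  rw [Fintype.piFinset_univ] at h
  rw [← h]
  simp [sum_stepW hs]

/-- If every step leads to `c` with probability `1/2`, then two different agents are simultaneously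
at `c` in a given round with probability `1/4`, whatever the past. -/
lemma sum_no_meet {p : V → V → ℝ} (hs : ∀ v, ∑ u, p v u = 1) {c : V} (hc : ∀ v, p v c = 1 / 2)
    {g h : A} (hgh : g ≠ h) (x : A → V) :
    ∑ ω : A → V → V, stepW p ω * ind (¬(ω g (x g) = c ∧ ω h (x h) = c)) = 3 / 4 := by
  have h1 := sum_stepW_prod hs x (fun i u => ind (i = g ∨ i = h → u = c))
  have h2 : ∀ i : A, ∑ u, p (x i) u * ind (i = g ∨ i = h → u = c)
      = if i ∈ ({g, h} : Finset A) then 1 / 2 else 1 := by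
    intro i
    by_cases hi : i = g ∨ i = h
    · simp [hi, hc, ind]
    · simp [hi, hs, ind]
  rw [prod_congr rfl fun i _ => h2 i, prod_ite_mem, univ_inter, prod_pair hgh] at h1
  have h3 : ∀ ω : A → V → V, ∏ i, ind (i = g ∨ i = h → ω i (x i) = c)
      = ind (ω g (x g) = c ∧ ω h (x h) = c) := by
    intro ω
    rw [prod_ind]
    congr 1
    refine propext ⟨fun H => ⟨H g (Or.inl rfl), H h (Or.inr rfl)⟩, ?_⟩
    rintro ⟨Hg, Hh⟩ i (rfl | rfl)
    · exact Hg
    · exact Hh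
  simp only [h3] at h1
  simp only [ind_not, mul_sub, mul_one]
  rw [sum_sub_distrib, h1, sum_stepW hs]
  norm_num

lemma meet_fail {p : V → V → ℝ} (hp : ∀ v u, 0 ≤ p v u) (hs : ∀ v, ∑ u, p v u = 1) {c : V}
    (hc : ∀ v, p v c = 1 / 2) {g h : A} (hgh : g ≠ h) (k₁ k : ℕ) (x0 : A → V) :
    ∑ σ : Fin k → A → V → V, (∏ t, stepW p (σ t)) *
      ind (∀ t < k, k₁ < t + 1 → ¬(walk x0 (extAV σ) g (t + 1) = c ∧
          walk x0 (extAV σ) h (t + 1) = c)) ≤ (3 / 4) ^ (k - k₁) := by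
  refine le_trans (survival_le hp k (fun t x => k₁ < t → ¬(x g = c ∧ x h = c))
    (fun t _ => (3 / 4) ^ (k - max t k₁)) ?_ ?_ x0) ?_
  · intro _
    simp [Nat.sub_eq_zero_of_le]
  · intro t ht x
    by_cases hk : k₁ < t + 1
    · have e : k - max t k₁ = (k - max (t + 1) k₁) + 1 := by omega
      simp only [hk, true_imp_iff]
      rw [e, pow_succ, ← sum_no_meet hs hc hgh x, mul_sum]
      exact le_of_eq (sum_congr rfl fun ω _ => by ring)
    · have e : k - max t k₁ = k - max (t + 1) k₁ := by omega
      simp only [hk, false_imp_iff, ind_pos trivial, one_mul]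
      rw [← sum_mul, sum_stepW hs, one_mul, e]
  · simp

/-- Per-agent upper bound for the probability of not visiting the source in the rounds after `t`
and up to `k₁`, when the killed walk contracts the weight `φ` by the factor `q`. -/
def avoidU (φ : V → ℝ) (q : ℝ) (k₁ t : ℕ) (u : V) : ℝ :=
  if t < k₁ then q ^ (k₁ - t) * φ u else 1

/-- If a weight `φ` with values in `[1, B]` is contracted by the factor `q` by the walk killed at
`s`, then one agent avoids `s` up to round `k₁` with probability at most `q ^ k₁ * B`, and the
agents do so independently. -/
lemma avoid_fail {p : V → V → ℝ} (hp : ∀ v u, 0 ≤ p v u) (hs : ∀ v, ∑ u, p v u = 1) {s : V}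
    {φ : V → ℝ} {q B : ℝ} (hq : 0 ≤ q) (hφ : ∀ v, 1 ≤ φ v) (hB : ∀ v, φ v ≤ B)
    (hstep : ∀ v, ∑ u, p v u * (ind (u ≠ s) * φ u) ≤ q * φ v)
    {k₁ k : ℕ} (hk₁ : 0 < k₁) (hk : k₁ ≤ k) (x0 : A → V) :
    ∑ σ : Fin k → A → V → V, (∏ t, stepW p (σ t)) *
      ind (∀ t < k, t + 1 ≤ k₁ → ∀ g, walk x0 (extAV σ) g (t + 1) ≠ s)
      ≤ (q ^ k₁ * B) ^ Fintype.card A := by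
  have hφ0 : ∀ v, 0 ≤ φ v := fun v => zero_le_one.trans (hφ v)
  have hU0 : ∀ t u, 0 ≤ avoidU φ q k₁ t u := by
    intro t u
    unfold avoidU
    split_ifs
    · exact mul_nonneg (pow_nonneg hq _) (hφ0 u)
    · exact zero_le_one
  refine le_trans (survival_le hp k (fun t x => t ≤ k₁ → ∀ g, x g ≠ s)
    (fun t x => ∏ g, avoidU φ q k₁ t (x g)) ?_ ?_ x0) ?_
  · intro x
    simp [avoidU, Nat.not_lt.2 hk]
  · intro t ht x
    have h1 := sum_stepW_prod hs x
      (fun _ u => ind (t + 1 ≤ k₁ → u ≠ s) * avoidU φ q k₁ (t + 1) u)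
    have h2 : ∀ ω : A → V → V,
        ind (t + 1 ≤ k₁ → ∀ g, ω g (x g) ≠ s) * ∏ g, avoidU φ q k₁ (t + 1) (ω g (x g))
        = ∏ g, ind (t + 1 ≤ k₁ → ω g (x g) ≠ s) * avoidU φ q k₁ (t + 1) (ω g (x g)) := by
      intro ω
      rw [prod_mul_distrib, prod_ind]
      congr 2
      exact propext ⟨fun h g hk => h hk g, fun h hk g => h g hk⟩
    rw [sum_congr rfl fun ω _ => by rw [h2 ω], h1]
    refine prod_le_prod (fun g _ => sum_nonneg fun u _ =>
      mul_nonneg (hp _ _) (mul_nonneg (ind_nonneg _) (hU0 _ _))) fun g _ => ?_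
    by_cases htk : t < k₁
    · have hle : ∀ u, avoidU φ q k₁ (t + 1) u ≤ q ^ (k₁ - (t + 1)) * φ u := by
        intro u
        unfold avoidU
        split_ifs with h3
        · exact le_rfl
        · simpa [show k₁ - (t + 1) = 0 by omega] using hφ u
      have e : avoidU φ q k₁ t (x g) = q ^ (k₁ - (t + 1)) * (q * φ (x g)) := by
        rw [avoidU, if_pos htk, show k₁ - t = (k₁ - (t + 1)) + 1 by omega, pow_succ, mul_assoc]
      rw [e]
      refine le_trans ?_ (mul_le_mul_of_nonneg_left (hstep (x g)) (pow_nonneg hq _))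
      rw [mul_sum]
      refine sum_le_sum fun u _ => ?_
      simp only [Nat.succ_le_iff.2 htk, true_imp_iff]
      rw [mul_left_comm (q ^ _), mul_left_comm (q ^ _)]
      exact mul_le_mul_of_nonneg_left (mul_le_mul_of_nonneg_left (hle u) (ind_nonneg _)) (hp _ _)
    · have h3 : ¬ (t + 1 < k₁) := by omega
      have h4 : ¬ (t + 1 ≤ k₁) := by omega
      simp only [avoidU, htk, h3, h4, if_false, false_imp_iff, ind_pos trivial, mul_one]
      exact (hs _).le
  · calc ∏ g, avoidU φ q k₁ 0 (x0 g) ≤ ∏ _g : A, (q ^ k₁ * B) := by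
          refine prod_le_prod (fun g _ => hU0 _ _) fun g _ => ?_
          rw [avoidU, if_pos hk₁, Nat.sub_zero]
          exact mul_le_mul_of_nonneg_left (hB _) (pow_nonneg hq _)
      _ = _ := by simp

end Noise

/-! ### Deterministic analysis of the protocol -/

section Deterministic

variable {V A : Type*}

lemma mxInf_mono (s : V) (x : A → ℕ → V) {t t' : ℕ} (h : t ≤ t') :
    (mxInf s x t).1 ⊆ (mxInf s x t').1 := by
  induction h with
  | refl => exact subset_rfl
  | step _ ih =>
    intro g hg
    exact Or.inl (Or.inl (ih hg))

lemma mxInf_source (s : V) (x : A → ℕ → V) {t : ℕ} {g : A} (h : x g t = s) :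
    (mxInf s x t).2 := by
  cases t with
  | zero => exact ⟨g, h⟩
  | succ t => exact Or.inr ⟨g, h⟩

lemma mxInf_nonempty (s : V) (x : A → ℕ → V) (t : ℕ) :
    (mxInf s x t).2 → ∃ g, g ∈ (mxInf s x t).1 := by
  induction t with
  | zero => exact fun h => h
  | succ t ih =>
    intro h
    by_cases h2 : (mxInf s x t).2
    · obtain ⟨g, hg⟩ := ih h2
      exact ⟨g, Or.inl (Or.inl hg)⟩
    · obtain ⟨g, hg⟩ := h.resolve_left h2
      exact ⟨g, Or.inr ⟨h2, hg⟩⟩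

/-- If the source is visited by round `k₁` and afterwards every two agents meet, then everyone
is informed: the agent first informed by the source meets all the others. -/
lemma mxInf_univ (s : V) (x : A → ℕ → V) {k₁ k : ℕ} (hk : k₁ ≤ k)
    (hvis : ∃ t ≤ k₁, ∃ g, x g t = s)
    (hmeet : ∀ g h, g ≠ h → ∃ t, k₁ ≤ t ∧ t < k ∧ x g (t + 1) = x h (t + 1)) :
    (mxInf s x k).1 = Set.univ := by
  obtain ⟨t, ht, g, hg⟩ := hvis
  obtain ⟨g₀, hg₀⟩ := mxInf_nonempty s x t (mxInf_source s x hg)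
  refine Set.eq_univ_of_forall fun h => ?_
  by_cases hgh : g₀ = h
  · exact mxInf_mono s x (ht.trans hk) (hgh ▸ hg₀)
  · obtain ⟨r, hr, hrk, hx⟩ := hmeet g₀ h hgh
    exact mxInf_mono s x (show r + 1 ≤ k from hrk)
      (Or.inl (Or.inr ⟨g₀, mxInf_mono s x (ht.trans hr) hg₀, hx⟩))

end Deterministic

/-! ### Union bound -/

/-- Pointwise form of the union bound over the failure events: the source is not visited up to
round `k₁`, or two agents are never together at `c` after round `k₁`. -/
lemma one_le_ind_sum {V A : Type*} [Fintype A] (s c : V) (x : A → ℕ → V) {k₁ k : ℕ} (hk : k₁ ≤ k) :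
    1 ≤ ind ((mxInf s x k).1 = Set.univ)
      + (ind (∀ t < k, t + 1 ≤ k₁ → ∀ g, x g (t + 1) ≠ s)
      + ∑ g : A, ∑ h : A, ind (g ≠ h) *
        ind (∀ t < k, k₁ < t + 1 → ¬(x g (t + 1) = c ∧ x h (t + 1) = c))) := by
  have i1 := ind_nonneg ((mxInf s x k).1 = Set.univ)
  have i2 := ind_nonneg (∀ t < k, t + 1 ≤ k₁ → ∀ g, x g (t + 1) ≠ s)
  have i3 : ∀ g h : A, 0 ≤ ind (g ≠ h) *
      ind (∀ t < k, k₁ < t + 1 → ¬(x g (t + 1) = c ∧ x h (t + 1) = c)) :=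
    fun g h => mul_nonneg (ind_nonneg _) (ind_nonneg _)
  have i4 := sum_nonneg fun (g : A) (_ : g ∈ univ) => sum_nonneg
        fun (h : A) (_ : h ∈ univ) => i3 g h
  by_cases c1 : ∀ t < k, t + 1 ≤ k₁ → ∀ g, x g (t + 1) ≠ s
  · rw [ind_pos c1]
    linarith
  by_cases c2 : ∃ g h : A, g ≠ h ∧
      ∀ t < k, k₁ < t + 1 → ¬(x g (t + 1) = c ∧ x h (t + 1) = c)
  · obtain ⟨g, h, hgh, hc⟩ := c2
    have e1 := single_le_sum (fun h _ => i3 g h) (mem_univ h)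
    have e2 := single_le_sum (fun g _ => sum_nonneg fun h (_ : h ∈ univ) => i3 g h) (mem_univ g)
    have e3 := e1.trans e2
    rw [ind_pos hgh, ind_pos hc] at e3
    linarith
  · have : (mxInf s x k).1 = Set.univ := by
      push Not at c1 c2
      refine mxInf_univ s _ hk ?_ ?_
      · obtain ⟨t, _, ht, g, hg⟩ := c1
        exact ⟨t + 1, ht, g, hg⟩
      · intro g h hgh
        obtain ⟨t, ht, ht', hg, hh⟩ := c2 g h hgh
        exact ⟨t, by omega, ht, hg.trans hh.symm⟩
    rw [ind_pos this]
    linarith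

section UnionBound

variable {V A : Type*} [Fintype V] [Fintype A]

lemma prob_lower_given_start {p : V → V → ℝ} (hp : ∀ v u, 0 ≤ p v u)
    (hs : ∀ v, ∑ u, p v u = 1) {c : V} (hc : ∀ v, p v c = 1 / 2) {s : V}
    {φ : V → ℝ} {q B : ℝ} (hq : 0 ≤ q) (hφ : ∀ v, 1 ≤ φ v) (hB : ∀ v, φ v ≤ B)
    (hstep : ∀ v, ∑ u, p v u * (ind (u ≠ s) * φ u) ≤ q * φ v)
    {k₁ k : ℕ} (hk₁ : 0 < k₁) (hk : k₁ ≤ k) (x0 : A → V) :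
    1 - ((q ^ k₁ * B) ^ Fintype.card A + (Fintype.card A : ℝ) ^ 2 * (3 / 4) ^ (k - k₁))
      ≤ ∑ σ : Fin k → A → V → V, (∏ t, stepW p (σ t)) *
        ind ((mxInf s (walk x0 (extAV σ)) k).1 = Set.univ) := by
  have h1 := avoid_fail hp hs hq hφ hB hstep hk₁ hk x0
  have h2 : ∑ g : A, ∑ h : A, ∑ σ : Fin k → A → V → V, (∏ t, stepW p (σ t)) *
      (ind (g ≠ h) * ind (∀ t < k, k₁ < t + 1 → ¬(walk x0 (extAV σ) g (t + 1) = c ∧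
        walk x0 (extAV σ) h (t + 1) = c)))
      ≤ (Fintype.card A : ℝ) ^ 2 * (3 / 4) ^ (k - k₁) := by
    have : ∀ g h : A, ∑ σ : Fin k → A → V → V, (∏ t, stepW p (σ t)) *
      (ind (g ≠ h) * ind (∀ t < k, k₁ < t + 1 → ¬(walk x0 (extAV σ) g (t + 1) = c ∧
        walk x0 (extAV σ) h (t + 1) = c))) ≤ (3 / 4) ^ (k - k₁) := by
      intro g h
      by_cases hgh : g = h
      · simp only [ind_neg (not_not.2 hgh), zero_mul, mul_zero, sum_const_zero]
        positivity
      · simp only [ind_pos hgh, one_mul]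
        exact meet_fail hp hs hc hgh k₁ k x0
    refine (sum_le_sum fun g _ => sum_le_sum fun h _ => this g h).trans (le_of_eq ?_)
    simp only [sum_const, card_univ, nsmul_eq_mul]
    ring
  have h3 := sum_noise (A := A) hs k
  have h4 := sum_le_sum fun (σ : Fin k → A → V → V) (_ : σ ∈ univ) =>
    mul_le_mul_of_nonneg_left (one_le_ind_sum s c (walk x0 (extAV σ)) hk)
      (prod_nonneg fun t (_ : t ∈ univ) => stepW_nonneg hp (σ t))
  simp only [mul_one, mul_add, sum_add_distrib, mul_sum] at h4
  rw [h3] at h4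
  rw [sum_comm (f := fun (σ : Fin k → A → V → V) (g : A) => ∑ h : A, (∏ t, stepW p (σ t)) *
      (ind (g ≠ h) * ind (∀ t < k, k₁ < t + 1 → ¬(walk x0 (extAV σ) g (t + 1) = c ∧
        walk x0 (extAV σ) h (t + 1) = c)))), sum_congr rfl fun g _ => sum_comm] at h4
  linarith

lemma prob_lower_of_weight {G : SimpleGraph V} (hp : ∀ v u, 0 ≤ lazyW G v u)
    (hs : ∀ v, ∑ u, lazyW G v u = 1) (hst0 : ∀ v, 0 ≤ statW G v) (hst : ∑ v, statW G v = 1)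
    {c : V} (hc : ∀ v, lazyW G v c = 1 / 2) {s : V}
    {φ : V → ℝ} {q B : ℝ} (hq : 0 ≤ q) (hφ : ∀ v, 1 ≤ φ v) (hB : ∀ v, φ v ≤ B)
    (hstep : ∀ v, ∑ u, lazyW G v u * (ind (u ≠ s) * φ u) ≤ q * φ v)
    {k₁ k : ℕ} (hk₁ : 0 < k₁) (hk : k₁ ≤ k) :
    1 - ((q ^ k₁ * B) ^ Fintype.card A + (Fintype.card A : ℝ) ^ 2 * (3 / 4) ^ (k - k₁))
      ≤ walksLazyProb (A := A) G k fun x => (mxInf s x k).1 = Set.univ := by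
  have hstat : ∑ x0 : A → V, ∏ g, statW G (x0 g) = 1 := by
    have h := Finset.prod_univ_sum (fun _ : A => (univ : Finset V)) (fun _ v => statW G v)
    rw [Fintype.piFinset_univ] at h
    rw [← h]
    simp only [hst, prod_const_one]
  have hx := sum_le_sum fun (x0 : A → V) (_ : x0 ∈ univ) =>
    mul_le_mul_of_nonneg_left (prob_lower_given_start hp hs hc hq hφ hB hstep hk₁ hk x0)
      (prod_nonneg fun g (_ : g ∈ univ) => hst0 (x0 g))
  rw [← sum_mul, hstat, one_mul] at hx
  refine hx.trans (le_of_eq ?_)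
  unfold walksLazyProb
  refine sum_congr rfl fun x0 _ => ?_
  rw [mul_sum]
  refine sum_congr rfl fun σ _ => ?_
  by_cases hE : (mxInf s (walk x0 (extAV σ)) k).1 = Set.univ
  · rw [ind_pos hE, if_pos hE, mul_one]
    rfl
  · rw [ind_neg hE, if_neg hE, mul_zero, mul_zero]

end UnionBound

/-! ### The star -/

lemma star_adj_center {n : ℕ} (c : Fin 1) (i : Fin n) :
    (starG n).Adj (Sum.inl c) (Sum.inr i) := by
  simp [starG]

lemma star_degree_center (n : ℕ) (c : Fin 1) : (starG n).degree (Sum.inl c) = n := by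
  have : (starG n).neighborFinset (Sum.inl c) = univ.map ⟨Sum.inr, Sum.inr_injective⟩ := by
    ext v
    rw [SimpleGraph.mem_neighborFinset]
    rcases v with v | v <;> simp [starG]
  rw [← SimpleGraph.card_neighborFinset_eq_degree, this]
  simp

lemma star_degree_leaf (n : ℕ) (i : Fin n) : (starG n).degree (Sum.inr i) = 1 := by
  have : (starG n).neighborFinset (Sum.inr i) = {Sum.inl 0} := by
    ext v
    rw [SimpleGraph.mem_neighborFinset]
    rcases v with v | v
    · rw [Subsingleton.elim v 0]
      simp [starG]
    · simp [starG]
  rw [← SimpleGraph.card_neighborFinset_eq_degree, this]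
  simp

lemma lazy_cc (n : ℕ) : lazyW (starG n) (Sum.inl 0) (Sum.inl 0) = 1 / 2 := by simp [lazyW]

lemma lazy_cl (n : ℕ) (i : Fin n) :
    lazyW (starG n) (Sum.inl 0) (Sum.inr i) = 1 / (2 * n) := by
  simp [lazyW, star_degree_center, star_adj_center]

lemma lazy_lc (n : ℕ) (i : Fin n) : lazyW (starG n) (Sum.inr i) (Sum.inl 0) = 1 / 2 := by
  simp [lazyW, star_degree_leaf, (star_adj_center 0 i).symm]

lemma lazy_ll (n : ℕ) (i j : Fin n) :
    lazyW (starG n) (Sum.inr i) (Sum.inr j) = if j = i then 1 / 2 else 0 := by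
  simp [lazyW, starG]

lemma lazyW_nonneg (n : ℕ) (v u) : 0 ≤ lazyW (starG n) v u := by
  unfold lazyW
  split_ifs <;> positivity

/-- One step from the center. -/
lemma sum_lazy_center (n : ℕ) (f : Fin 1 ⊕ Fin n → ℝ) :
    ∑ u, lazyW (starG n) (Sum.inl 0) u * f u
      = 1 / 2 * f (Sum.inl 0) + 1 / (2 * n) * ∑ i, f (Sum.inr i) := by
  simp [lazy_cc, lazy_cl, mul_sum]

/-- One step from a leaf. -/
lemma sum_lazy_leaf (n : ℕ) (i : Fin n) (f : Fin 1 ⊕ Fin n → ℝ) :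
    ∑ u, lazyW (starG n) (Sum.inr i) u * f u
      = 1 / 2 * f (Sum.inl 0) + 1 / 2 * f (Sum.inr i) := by
  simp [lazy_lc, lazy_ll]

lemma sum_lazy {n : ℕ} (hn : 0 < n) (v) : ∑ u, lazyW (starG n) v u = 1 := by
  have hn' : (n : ℝ) ≠ 0 := by positivity
  rcases v with c | i
  · rw [Subsingleton.elim c 0]
    have := sum_lazy_center n (fun _ => 1)
    simp only [mul_one] at this
    rw [this]
    simp
    field_simp
    norm_num
  · have := sum_lazy_leaf n i (fun _ => 1)
    simp only [mul_one] at this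
    rw [this]
    norm_num

/-- Whatever the current position, the walk is at the center next with probability `1/2`. -/
lemma lazy_to_center (n : ℕ) (v) : lazyW (starG n) v (Sum.inl 0) = 1 / 2 := by
  rcases v with c | i
  · rw [Subsingleton.elim c 0, lazy_cc]
  · exact lazy_lc n i

lemma sum_stat {n : ℕ} (hn : 0 < n) : ∑ v, statW (starG n) v = 1 := by
  have hn' : (n : ℝ) ≠ 0 := by positivity
  unfold statW
  rw [← sum_div, div_self]
  simp [star_degree_center, star_degree_leaf]
  positivity

lemma stat_nonneg (n : ℕ) (v) : 0 ≤ statW (starG n) v := by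
  unfold statW
  positivity

/-- Weight of a vertex of the star: the center is closer to a leaf source than the other leaves
are, whence its smaller value. -/
def starWt (n : ℕ) : Fin 1 ⊕ Fin n → ℝ := Sum.elim (fun _ => 1) (fun _ => (1 - 1 / (2 * (n : ℝ)))⁻¹)

/-- A single walk killed at the source contracts `starWt` by the factor `1 - 1/(4n)`. -/
lemma avoid_step {n : ℕ} (hn : 2 ≤ n) (s v : Fin 1 ⊕ Fin n) :
    ∑ u, lazyW (starG n) v u * (ind (u ≠ s) * starWt n u)
      ≤ (1 - 1 / (4 * n)) * starWt n v := by
  obtain ⟨z, hz⟩ : ∃ z : ℝ, z = 1 / (4 * n) := ⟨_, rfl⟩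
  have hn' : (2 : ℝ) ≤ n := by exact_mod_cast hn
  have hz0 : 0 < z := by rw [hz]; positivity
  have hz1 : z ≤ 1 / 8 := by
    rw [hz, div_le_div_iff₀ (by positivity) (by norm_num)]
    linarith
  have h2 : 1 / (2 * n : ℝ) = 2 * z := by rw [hz]; field_simp; norm_num
  obtain ⟨b, hb⟩ : ∃ b : ℝ, b = (1 - 1 / (2 * (n : ℝ)))⁻¹ := ⟨_, rfl⟩
  have hbz : b * (1 - 2 * z) = 1 := by
    rw [hb, h2, inv_mul_cancel₀]
    linarith
  have hb1 : 1 ≤ b := by nlinarith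
  have hnz : 2 * z * n = 1 / 2 := by rw [hz]; field_simp; norm_num
  have hle : ∀ u, ind (u ≠ s) * starWt n u ≤ starWt n u := by
    intro u
    have : 0 ≤ starWt n u := by
      rcases u with u | u
      · simp [starWt]
      · simp only [starWt, Sum.elim_inr, ← hb]
        linarith
    by_cases h : u ≠ s
    · rw [ind_pos h, one_mul]
    · rwa [ind_neg h, zero_mul]
  rw [← hz]
  rcases v with c | i
  · rw [Subsingleton.elim c 0, sum_lazy_center, h2]
    rcases s with c' | j
    · rw [Subsingleton.elim c' 0]
      simp only [starWt, Sum.elim_inl, Sum.elim_inr, ← hb, ne_eq, not_true_eq_false, reduceCtorEq,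
        not_false_eq_true, ind_pos trivial, ind_neg not_false, sum_const, card_univ,
        Fintype.card_fin, nsmul_eq_mul, mul_zero, one_mul, zero_add, mul_one]
      nlinarith
    · have : ∀ i : Fin n, ind ((Sum.inr i : Fin 1 ⊕ Fin n) ≠ Sum.inr j) * b
          = b - if i = j then b else 0 := by
        intro i
        by_cases hij : i = j <;> simp [hij, ind]
      simp only [starWt, Sum.elim_inl, Sum.elim_inr, ← hb]
      rw [sum_congr rfl fun i _ => this i, sum_sub_distrib, sum_ite_eq' univ j fun _ => b]
      simp only [ne_eq, reduceCtorEq, not_false_eq_true, ind_pos trivial, sum_const, card_univ,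
        Fintype.card_fin, nsmul_eq_mul, mem_univ, if_true]
      nlinarith
  · rw [sum_lazy_leaf]
    have e1 := hle (Sum.inl 0)
    have e2 := hle (Sum.inr i)
    simp only [starWt, Sum.elim_inl, Sum.elim_inr, ← hb] at e1 e2 ⊢
    nlinarith

lemma prob_lower {n : ℕ} (hn : 2 ≤ n) (s : Fin 1 ⊕ Fin n) (a : ℕ) {k₁ k : ℕ} (hk₁ : 0 < k₁)
    (hk : k₁ ≤ k) :
    1 - (((1 - 1 / (4 * n : ℝ)) ^ k₁ * (1 - 1 / (2 * n : ℝ))⁻¹) ^ a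
      + (a : ℝ) ^ 2 * (3 / 4) ^ (k - k₁)) ≤ mxLazyProbLe (starG n) s a k := by
  have hn0 : 0 < n := by omega
  have hn' : (2 : ℝ) ≤ n := by exact_mod_cast hn
  have hq : 0 ≤ 1 - 1 / (4 * n : ℝ) := by
    rw [sub_nonneg, div_le_one (by positivity)]
    linarith
  have hc : 0 < 1 - 1 / (2 * n : ℝ) := by
    rw [sub_pos, div_lt_one (by positivity)]
    linarith
  have hb : 1 ≤ (1 - 1 / (2 * n : ℝ))⁻¹ := by
    rw [one_le_inv₀ hc]
    have : 0 < 1 / (2 * n : ℝ) := by positivity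
    linarith
  have h := prob_lower_of_weight (A := Fin a) (s := s) (φ := starWt n) (lazyW_nonneg n)
    (sum_lazy hn0) (stat_nonneg n) (sum_stat hn0) (lazy_to_center n) hq
    (by rintro (v | v) <;> simp only [starWt, Sum.elim_inl, Sum.elim_inr, le_refl, hb])
    (B := (1 - 1 / (2 * n : ℝ))⁻¹)
    (by rintro (v | v) <;> simp only [starWt, Sum.elim_inl, Sum.elim_inr, le_refl, hb])
    (avoid_step hn s) hk₁ hk
  rw [Fintype.card_fin] at h
  exact h

/-! ### Numerical estimates -/

lemma avoid_numeric {n a k₁ : ℕ} {α : ℝ} (hn : 2 ≤ n) (hα : 0 < α) (hk : 4 ≤ k₁)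
    (ha : α * n / 2 ≤ a) :
    ((1 - 1 / (4 * n : ℝ)) ^ k₁ * (1 - 1 / (2 * n : ℝ))⁻¹) ^ a
      ≤ Real.exp (-(α * (k₁ - 4) / 8)) := by
  have hn' : (2 : ℝ) ≤ n := by exact_mod_cast hn
  have hk' : (4 : ℝ) ≤ k₁ := by exact_mod_cast hk
  have hc : 0 < 1 - 1 / (2 * n : ℝ) := by
    rw [sub_pos, div_lt_one (by positivity)]
    linarith
  have hq : 0 ≤ 1 - 1 / (4 * n : ℝ) := by
    rw [sub_nonneg, div_le_one (by positivity)]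
    linarith
  have h1 : 1 - 1 / (4 * n : ℝ) ≤ Real.exp (-(1 / (4 * n))) := by
    linarith [Real.add_one_le_exp (-(1 / (4 * n : ℝ)))]
  have h2 : (1 - 1 / (2 * n : ℝ))⁻¹ ≤ Real.exp (1 / n) := by
    have h3 : (1 - 1 / (2 * n : ℝ))⁻¹ ≤ 1 / n + 1 := by
      have e : 1 / (2 * n : ℝ) = (1 / n) / 2 := by field_simp
      have e2 : 1 / (n : ℝ) ≤ 1 / 2 := one_div_le_one_div_of_le (by norm_num) hn'
      have e3 : 0 < 1 / (n : ℝ) := by positivity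
      rw [inv_le_iff_one_le_mul₀ hc, e]
      nlinarith
    exact h3.trans (Real.add_one_le_exp _)
  calc ((1 - 1 / (4 * n : ℝ)) ^ k₁ * (1 - 1 / (2 * n : ℝ))⁻¹) ^ a
      ≤ (Real.exp (-(1 / (4 * n))) ^ k₁ * Real.exp (1 / n)) ^ a := by
        have : 0 ≤ (1 - 1 / (2 * n : ℝ))⁻¹ := inv_nonneg.2 hc.le
        gcongr
    _ = Real.exp (-(a * ((k₁ - 4) / (4 * n)))) := by
        rw [← Real.exp_nat_mul, ← Real.exp_add, ← Real.exp_nat_mul]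
        congr 1
        field_simp
        ring
    _ ≤ _ := by
        refine Real.exp_le_exp.2 (neg_le_neg ?_)
        calc α * (k₁ - 4) / 8 = α * n / 2 * ((k₁ - 4) / (4 * n)) := by field_simp; ring
          _ ≤ _ := mul_le_mul_of_nonneg_right ha (div_nonneg (by linarith) (by positivity))

lemma meet_numeric {n a j : ℕ} {α : ℝ} (hn : 0 < n) (ha : a ≤ α * n) :
    (a : ℝ) ^ 2 * (3 / 4) ^ j ≤ Real.exp (2 * α + 2 * Real.log n - j / 4) := by
  have hn' : (0 : ℝ) < n := by exact_mod_cast hn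
  have h1 : (a : ℝ) ≤ Real.exp (α + Real.log n) := by
    rw [Real.exp_add, Real.exp_log hn']
    refine ha.trans (mul_le_mul_of_nonneg_right ?_ hn'.le)
    linarith [Real.add_one_le_exp α]
  have h2 : (3 / 4 : ℝ) ≤ Real.exp (-(1 / 4)) := by
    linarith [Real.add_one_le_exp (-(1 / 4) : ℝ)]
  calc (a : ℝ) ^ 2 * (3 / 4) ^ j
      ≤ Real.exp (α + Real.log n) ^ 2 * Real.exp (-(1 / 4)) ^ j := by gcongr
    _ = _ := by
      rw [← Real.exp_nat_mul, ← Real.exp_nat_mul, ← Real.exp_add]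
      congr 1
      push_cast
      ring

end StarMeet

/-- For any constants `α, λ > 0` there are `C` and `n₀` such that for
all `n ≥ n₀` and every source `s` of the star `S_n`, MEET-EXCHANGE with lazy walks and
`⌊α n⌋` agents satisfies `P[T_meetx(S_n, s) ≤ C log n] ≥ 1 − n^{−λ}`. -/
theorem star_meetx_fast (α lam : ℝ) (hα : 0 < α) (hlam : 0 < lam) :
    ∃ C : ℝ, ∃ n₀ : ℕ, ∀ n : ℕ, n₀ ≤ n → ∀ s : Fin 1 ⊕ Fin n,
      1 - (n : ℝ) ^ (-lam)
        ≤ Rumor.mxLazyProbLe (starG n) s ⌊α * n⌋₊ ⌊C * Real.log n⌋₊ := by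
  obtain ⟨C, hC⟩ : ∃ C : ℝ, C = 16 * (lam + 1) / α + 8 * (lam + 3) := ⟨_, rfl⟩
  -- `n ≥ exp (2 + 2α)` makes `log n` absorb all additive constants, `n ≥ 2/α` gives `⌊αn⌋ ≥ αn/2`.
  refine ⟨C, max 2 (max ⌈Real.exp (2 + 2 * α)⌉₊ ⌈2 / α⌉₊), fun n hn s => ?_⟩
  have hn2 : 2 ≤ n := (le_max_left _ _).trans hn
  have hn3 : Real.exp (2 + 2 * α) ≤ n :=
    (Nat.le_ceil _).trans (by exact_mod_cast ((le_max_left _ _).trans (le_max_right _ _)).trans hn)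
  have hn4 : 2 / α ≤ n :=
    (Nat.le_ceil _).trans (by exact_mod_cast ((le_max_right _ _).trans (le_max_right _ _)).trans hn)
  have hn0 : (0 : ℝ) < n := by
    have : 0 < n := by omega
    exact_mod_cast this
  obtain ⟨L, hL⟩ : ∃ L : ℝ, L = Real.log n := ⟨_, rfl⟩
  have hL2 : 2 + 2 * α ≤ L := by
    rw [hL, Real.le_log_iff_exp_le hn0]
    exact hn3
  have hCα : α * C = 16 * (lam + 1) + α * (8 * (lam + 3)) := by
    rw [hC, mul_add, mul_div_cancel₀ _ hα.ne']
  have hC8 : 8 * (lam + 3) ≤ C := by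
    rw [hC]
    have : 0 < 16 * (lam + 1) / α := by positivity
    linarith
  have hCL : 8 * (lam + 3) * L ≤ C * L := mul_le_mul_of_nonneg_right hC8 (by linarith)
  have hlL : 0 < lam * L := mul_pos hlam (by linarith)
  obtain ⟨k, hk⟩ : ∃ k : ℕ, k = ⌊C * L⌋₊ := ⟨_, rfl⟩
  have hk1 : C * L - 1 < k := by
    rw [hk]
    linarith [Nat.lt_floor_add_one (C * L)]
  have hh1 : (k : ℝ) - 1 ≤ 2 * ((k / 2 : ℕ) : ℝ) := by
    have : k ≤ 2 * (k / 2) + 1 := by omega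
    have : (k : ℝ) ≤ 2 * ((k / 2 : ℕ) : ℝ) + 1 := by exact_mod_cast this
    linarith
  have hh2 : (k : ℝ) ≤ 2 * ((k - k / 2 : ℕ) : ℝ) := by
    have : k ≤ 2 * (k - k / 2) := by omega
    exact_mod_cast this
  have hk4 : 4 ≤ k / 2 := by
    have : (4 : ℝ) ≤ ((k / 2 : ℕ) : ℝ) := by nlinarith
    exact_mod_cast this
  have ha1 : (⌊α * n⌋₊ : ℝ) ≤ α * n := Nat.floor_le (by positivity)
  have ha2 : α * n / 2 ≤ (⌊α * n⌋₊ : ℝ) := by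
    rw [div_le_iff₀ hα] at hn4
    linarith [Nat.lt_floor_add_one (α * n)]
  have hpow : (n : ℝ) ^ (-lam) = Real.exp (-(lam * L)) := by
    rw [Real.rpow_def_of_pos hn0, ← hL]
    congr 1
    ring
  have hhalf : Real.exp (-(lam * L) - 1) ≤ (n : ℝ) ^ (-lam) / 2 := by
    rw [hpow, Real.exp_sub, div_le_div_iff_of_pos_left (Real.exp_pos _) (Real.exp_pos _) two_pos]
    linarith [Real.add_one_le_exp (1 : ℝ)]
  rw [← hL, ← hk]
  refine le_trans ?_ (StarMeet.prob_lower hn2 s ⌊α * n⌋₊ (k₁ := k / 2) (k := k)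
    (by omega) (by omega))
  have e1 := StarMeet.avoid_numeric hn2 hα hk4 ha2
  have e2 := StarMeet.meet_numeric (j := k - k / 2) (by omega : 0 < n) ha1
  have e3 : Real.exp (-(α * (((k / 2 : ℕ) : ℝ) - 4) / 8)) ≤ Real.exp (-(lam * L) - 1) := by
    refine Real.exp_le_exp.2 ?_
    have : α * (C * L / 2 - 5) ≤ α * (((k / 2 : ℕ) : ℝ) - 4) :=
      mul_le_mul_of_nonneg_left (by linarith) hα.le
    have h5 : α * (C * L / 2 - 5) = 8 * (lam + 1) * L + α * (4 * (lam + 3)) * L - 5 * α := by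
      have : α * (C * L / 2 - 5) = (α * C) * L / 2 - 5 * α := by ring
      rw [this, hCα]
      ring
    have h6 : 0 < α * (4 * (lam + 3)) * L := by
      have : 0 < L := by linarith
      positivity
    nlinarith
  have e4 : Real.exp (2 * α + 2 * Real.log n - ((k - k / 2 : ℕ) : ℝ) / 4)
      ≤ Real.exp (-(lam * L) - 1) := by
    refine Real.exp_le_exp.2 ?_
    rw [← hL]
    linarith
  linarith
end
end

section
/- Let G = (V,E) be a connected d-regular graph with n vertices, and let m independent simple random walks on G each be started from a vertex chosen independently from the stationary distribution (which is uniform on V). Let Γ(u) denote the neighborhood of u, and let Z_v(t) denote the number of walks at vertex v in round t. Then for every integer k ≥ 1 and every real γ ≥ 2e·m/n, the probability that Σ_{v∈Γ(u)} Z_v(t) ≤ γ·d holds simultaneously for all u ∈ V and all rounds 0 ≤ t < k is at least 1 − k·n·2^{−γ·d}. -/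
/-!
At every time the position of a walk started from the uniform distribution is again uniform,
because the transition matrix of a `d`-regular graph is doubly stochastic (`Rumor.sum_pos`), and
different agents are independent (`Rumor.sum_prod_agents`). Hence the number `X` of walks in
`Γ(u)` at time `t` is binomial with parameters `m` and `d / n`, and its exponential moment
satisfies `E[(2e)^X] = (1 + (2e - 1) d / n)^m ≤ exp (2e m d / n) ≤ exp (γ d)`
(`Rumor.sum_totW_pow_le`). Markov's inequality gives
`P[X > γ d] ≤ (2e)^(-γ d) exp (γ d) = 2^(-γ d)`, and a union bound over the `n` vertices and `k`
rounds finishes the proof. When `d = 0` the weights do not form a probability distribution (the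
stationary weight is `0 / 0 = 0`), but then the claimed lower bound is nonpositive.
-/

open Finset
open scoped Classical ENNReal

noncomputable section

namespace Rumor

/-! ### Trajectories of a single walk -/

/-- Position at time `t` of a single walk started at `x` and driven by the noise `τ`. -/
def pos {V : Type*} {k : ℕ} (x : V) (τ : Fin k → V → V) (t : ℕ) : V :=
  walk (A := Unit) (fun _ => x) (extAV fun s _ => τ s) () t

/-- Probability weight of the noise `τ` that drives a single walk. -/
def noiseW {V : Type*} [Fintype V] (G : SimpleGraph V) {k : ℕ} (τ : Fin k → V → V) : ℝ :=
  ∏ s : Fin k, ∏ v : V, nbrW G v (τ s v)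

lemma walk_eq_pos {V A : Type*} {k : ℕ} (x0 : A → V) (σ : Fin k → A → V → V) (g : A) (t : ℕ) :
    walk x0 (extAV σ) g t = pos (x0 g) (fun s => σ s g) t := by
  induction t with
  | zero => rfl
  | succ t ih =>
    simp only [pos, walk] at ih ⊢
    rw [ih]
    unfold extAV
    split_ifs <;> rfl

lemma pos_cons_succ {V : Type*} {k : ℕ} (x : V) (a : V → V) (τ : Fin k → V → V) (t : ℕ) :
    pos x (Fin.cons a τ : Fin (k + 1) → V → V) (t + 1) = pos (a x) τ t := by
  induction t with
  | zero => simp [pos, walk, extAV]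
  | succ t ih =>
    simp only [pos, walk] at ih ⊢
    rw [ih]
    unfold extAV
    by_cases h : t < k
    · have h' : t + 1 < k + 1 := by omega
      simp only [h, h', dif_pos]
      rfl
    · have h' : ¬ t + 1 < k + 1 := by omega
      simp only [h, h', dif_neg, not_false_iff]

variable {V : Type*} [Fintype V] (G : SimpleGraph V)

lemma nbrW_nonneg (v u : V) : 0 ≤ nbrW G v u := by
  unfold nbrW; split_ifs <;> positivity

lemma statW_nonneg (v : V) : 0 ≤ statW G v := by
  unfold statW; positivity

/-! ### Product measures -/

/-- If each row of `w` has total mass one, the coordinate `p x` of a random map `p` with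
independent coordinates `p v ~ w v` is distributed as `w x`. -/
lemma sum_prod_marginal (w : V → V → ℝ) (hw : ∀ v, ∑ u, w v u = 1) (h : V → ℝ) (x : V) :
    ∑ p : V → V, (∏ v, w v (p v)) * h (p x) = ∑ u, w x u * h u := by
  have key := Fintype.prod_sum (fun v u : V => w v u * (if v = x then h u else 1))
  have h1 : ∀ p : V → V, ∏ v, (w v (p v) * if v = x then h (p v) else 1)
      = (∏ v, w v (p v)) * h (p x) := by
    intro p
    rw [Finset.prod_mul_distrib, Finset.prod_ite_eq' univ x (fun v => h (p v))]
    simp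
  simp only [h1] at key
  rw [← key, Finset.prod_eq_single x]
  · simp
  · intro v _ hv
    simp [hv, hw]
  · simp

/-- The walks of different agents are independent, so expectations of products factor. -/
lemma sum_prod_agents {A : Type*} [Fintype A] {k : ℕ} (F : V → (Fin k → V → V) → ℝ) :
    ∑ x0 : A → V, ∑ σ : Fin k → A → V → V, ∏ g, F (x0 g) (fun s => σ s g)
      = (∑ x, ∑ τ, F x τ) ^ Fintype.card A := by
  have h1 : ∀ x0 : A → V, ∑ σ : Fin k → A → V → V, ∏ g, F (x0 g) (fun s => σ s g)
      = ∏ g, ∑ τ, F (x0 g) τ := by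
    intro x0
    rw [Fintype.prod_sum]
    exact Fintype.sum_equiv (Equiv.piComm fun _ _ => V → V) _ _ (fun σ => rfl)
  simp only [h1]
  rw [← Fintype.prod_sum (fun (_ : A) x => ∑ τ, F x τ)]
  simp

/-! ### Stationarity of the uniform distribution on a regular graph -/

section regular

variable {G} {d : ℕ}

lemma degree_eq_of_regular (hreg : G.IsRegularOfDegree d) (v : V) : G.degree v = d := by
  convert hreg v

lemma statW_eq (hreg : G.IsRegularOfDegree d) (hd : 0 < d) (v : V) :
    statW G v = 1 / (Fintype.card V : ℝ) := by
  have : (d : ℝ) ≠ 0 := by positivity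
  have : Nonempty V := ⟨v⟩
  have : (Fintype.card V : ℝ) ≠ 0 := by simp
  simp only [statW, degree_eq_of_regular hreg, sum_const, card_univ, nsmul_eq_mul]
  field_simp

lemma sum_nbrW (hreg : G.IsRegularOfDegree d) (hd : 0 < d) (v : V) : ∑ u, nbrW G v u = 1 := by
  have : (d : ℝ) ≠ 0 := by positivity
  have h := degree_eq_of_regular hreg v
  simp only [nbrW, h]
  rw [← Finset.sum_filter, ← G.neighborFinset_eq_filter (v := v), sum_const,
    G.card_neighborFinset_eq_degree, h]
  simp [this]

lemma sum_nbrW' (hreg : G.IsRegularOfDegree d) (hd : 0 < d) (u : V) : ∑ v, nbrW G v u = 1 := by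
  rw [← sum_nbrW hreg hd u]
  refine Finset.sum_congr rfl fun v _ => ?_
  simp only [nbrW, degree_eq_of_regular hreg, G.adj_comm]

lemma sum_noiseW (hreg : G.IsRegularOfDegree d) (hd : 0 < d) (k : ℕ) :
    ∑ τ : Fin k → V → V, noiseW G τ = 1 := by
  unfold noiseW
  rw [← Fintype.prod_sum (fun (_ : Fin k) (p : V → V) => ∏ v, nbrW G v (p v))]
  refine Finset.prod_eq_one fun s _ => ?_
  rw [← Fintype.prod_sum (fun v u => nbrW G v u)]
  exact Finset.prod_eq_one fun v _ => sum_nbrW hreg hd v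

/-- A walk started from the uniform distribution is uniform at every time `t ≤ k`. -/
lemma sum_pos (hreg : G.IsRegularOfDegree d) (hd : 0 < d) (f : V → ℝ) (k t : ℕ) (ht : t ≤ k) :
    ∑ x, ∑ τ : Fin k → V → V, noiseW G τ * f (pos x τ t) = ∑ v, f v := by
  induction t generalizing k with
  | zero =>
    refine Finset.sum_congr rfl fun x _ => ?_
    have : ∀ τ : Fin k → V → V, pos x τ 0 = x := fun _ => rfl
    simp only [this, ← Finset.sum_mul, sum_noiseW hreg hd, one_mul]
  | succ t ih =>
    obtain ⟨k, rfl⟩ : ∃ j, k = j + 1 := ⟨k - 1, by omega⟩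
    rw [← ih k (by omega)]
    -- condition on the first step
    have h1 : ∀ x, ∑ τ : Fin (k + 1) → V → V, noiseW G τ * f (pos x τ (t + 1))
        = ∑ u, nbrW G x u * ∑ τ : Fin k → V → V, noiseW G τ * f (pos u τ t) := by
      intro x
      rw [← sum_prod_marginal (nbrW G) (sum_nbrW hreg hd),
        ← (Fin.consEquiv fun _ => V → V).sum_comp, Fintype.sum_prod_type]
      refine Finset.sum_congr rfl fun a _ => ?_
      rw [Finset.mul_sum]
      refine Finset.sum_congr rfl fun τ _ => ?_
      have h2 : (Fin.consEquiv fun _ => V → V) (a, τ) = (Fin.cons a τ : Fin (k + 1) → V → V) := rfl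
      rw [h2, pos_cons_succ]
      simp [noiseW, Fin.prod_univ_succ, mul_assoc]
    simp only [h1]
    rw [Finset.sum_comm]
    refine Finset.sum_congr rfl fun u _ => ?_
    rw [← Finset.sum_mul, sum_nbrW' hreg hd, one_mul]

end regular

/-! ### Exponential moments of neighborhood occupation -/

/-- Joint weight of the starting vertices and the noise in `walksProb`. -/
def totW {A : Type*} [Fintype A] {k : ℕ} (x0 : A → V) (σ : Fin k → A → V → V) : ℝ :=
  (∏ g : A, statW G (x0 g)) * ∏ t : Fin k, ∏ g : A, ∏ v : V, nbrW G v (σ t g v)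

lemma totW_nonneg {A : Type*} [Fintype A] {k : ℕ} (x0 : A → V) (σ : Fin k → A → V → V) :
    0 ≤ totW G x0 σ :=
  mul_nonneg (Finset.prod_nonneg fun _ _ => statW_nonneg G _)
    (Finset.prod_nonneg fun _ _ => Finset.prod_nonneg fun _ _ =>
      Finset.prod_nonneg fun _ _ => nbrW_nonneg G _ _)

lemma totW_eq {A : Type*} [Fintype A] {k : ℕ} (x0 : A → V) (σ : Fin k → A → V → V) :
    totW G x0 σ = ∏ g, (statW G (x0 g) * noiseW G (fun s => σ s g)) := by
  rw [totW, Finset.prod_comm, Finset.prod_mul_distrib]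
  rfl

variable {G} {d : ℕ}

/-- Since the positions at time `t` are independent and uniform, the expectation of a product
over the agents of `f (position)` is a power of the mean of `f`. -/
lemma sum_totW_prod {A : Type*} [Fintype A] (hreg : G.IsRegularOfDegree d) (hd : 0 < d)
    (f : V → ℝ) (k t : ℕ) (ht : t ≤ k) :
    ∑ x0 : A → V, ∑ σ : Fin k → A → V → V,
      totW G x0 σ * ∏ g, f (walk x0 (extAV σ) g t)
      = ((∑ v, f v) / (Fintype.card V : ℝ)) ^ Fintype.card A := by
  simp only [totW_eq, walk_eq_pos, ← Finset.prod_mul_distrib]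
  rw [sum_prod_agents (fun x τ => statW G x * noiseW G τ * f (pos x τ t))]
  congr 1
  rw [← sum_pos hreg hd f k t ht, Finset.sum_div]
  refine Finset.sum_congr rfl fun x _ => ?_
  rw [Finset.sum_div]
  refine Finset.sum_congr rfl fun τ _ => ?_
  rw [statW_eq hreg hd]
  ring

lemma sum_totW {A : Type*} [Fintype A] [Nonempty V] (hreg : G.IsRegularOfDegree d) (hd : 0 < d)
    (k : ℕ) : ∑ x0 : A → V, ∑ σ : Fin k → A → V → V, totW G x0 σ = 1 := by
  simpa using sum_totW_prod (A := A) hreg hd (fun _ => 1) k 0 (Nat.zero_le _)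

lemma sum_card_neighbor {A : Type*} [Fintype A] (u : V) (y : A → V) :
    ∑ v ∈ G.neighborFinset u, (univ.filter fun g : A => y g = v).card
      = (univ.filter fun g : A => G.Adj u (y g)).card := by
  rw [Finset.card_eq_sum_card_fiberwise (f := y) (t := G.neighborFinset u)]
  · refine Finset.sum_congr rfl fun v hv => ?_
    congr 1
    ext g
    simp only [mem_filter, mem_univ, true_and]
    constructor
    · rintro rfl
      exact ⟨by simpa using hv, rfl⟩
    · exact fun h => h.2
  · intro g hg
    simpa using hg

/-- Exponential moment, with base `2e`, of the number of walks in `Γ(u)` at time `t`. -/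
lemma sum_totW_pow_le {A : Type*} [Fintype A] [Nonempty V] (hreg : G.IsRegularOfDegree d) (hd : 0 < d)
    (u : V) (k t : ℕ) (ht : t ≤ k) :
    ∑ x0 : A → V, ∑ σ : Fin k → A → V → V, totW G x0 σ *
      (2 * Real.exp 1) ^ (univ.filter fun g => G.Adj u (walk x0 (extAV σ) g t)).card
      ≤ Real.exp (2 * Real.exp 1 * Fintype.card A / Fintype.card V * d) := by
  have h1 := sum_totW_prod (A := A) hreg hd
    (fun v => if G.Adj u v then 2 * Real.exp 1 else 1) k t ht
  simp only [Finset.prod_ite, prod_const, one_pow, mul_one] at h1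
  rw [h1]
  have hn : (0 : ℝ) < Fintype.card V := by exact_mod_cast Fintype.card_pos
  have hs : ∑ v, (if G.Adj u v then 2 * Real.exp 1 else (1 : ℝ))
      = Fintype.card V + d * (2 * Real.exp 1 - 1) := by
    have h2 : ∀ v, (if G.Adj u v then 2 * Real.exp 1 else (1 : ℝ))
        = 1 + if G.Adj u v then 2 * Real.exp 1 - 1 else 0 := by
      intro v; split_ifs <;> ring
    simp only [h2, Finset.sum_add_distrib]
    rw [← Finset.sum_filter, ← G.neighborFinset_eq_filter (v := u), sum_const, sum_const,
      G.card_neighborFinset_eq_degree, degree_eq_of_regular hreg]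
    simp
  have hb : (∑ v, (if G.Adj u v then 2 * Real.exp 1 else (1 : ℝ))) / (Fintype.card V : ℝ)
      ≤ Real.exp (2 * Real.exp 1 / Fintype.card V * d) := by
    refine le_trans ?_ (Real.add_one_le_exp _)
    rw [hs, div_le_iff₀ hn]
    have : (2 * Real.exp 1 / Fintype.card V * d + 1) * (Fintype.card V : ℝ)
      = 2 * Real.exp 1 * d + Fintype.card V := by field_simp
    rw [this]
    have : (0 : ℝ) ≤ d := by positivity
    linarith
  have h0 : 0 ≤ (∑ v, (if G.Adj u v then 2 * Real.exp 1 else (1 : ℝ))) / (Fintype.card V : ℝ) := by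
    rw [hs]
    have := Real.add_one_le_exp (1 : ℝ)
    have : (0 : ℝ) ≤ d := by positivity
    apply div_nonneg _ hn.le
    nlinarith
  refine (pow_le_pow_left₀ h0 hb (Fintype.card A)).trans_eq ?_
  rw [← Real.exp_nat_mul]
  congr 1
  ring

/-! ### Union bound -/

/-- Pull the last two of four summation signs to the front. -/
lemma sum_swap {α β δ ε : Type*} (a : Finset α) (b : Finset β) (c : Finset δ) (e : Finset ε)
    (F : α → β → δ → ε → ℝ) :
    ∑ x ∈ a, ∑ y ∈ b, ∑ z ∈ c, ∑ w ∈ e, F x y z w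
      = ∑ z ∈ c, ∑ w ∈ e, ∑ x ∈ a, ∑ y ∈ b, F x y z w := by
  calc _ = ∑ x ∈ a, ∑ z ∈ c, ∑ y ∈ b, ∑ w ∈ e, F x y z w :=
        Finset.sum_congr rfl fun _ _ => Finset.sum_comm
    _ = ∑ z ∈ c, ∑ x ∈ a, ∑ w ∈ e, ∑ y ∈ b, F x y z w := by
        rw [Finset.sum_comm]
        exact Finset.sum_congr rfl fun _ _ => Finset.sum_congr rfl fun _ _ => Finset.sum_comm
    _ = _ := Finset.sum_congr rfl fun _ _ => Finset.sum_comm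

/-- The main estimate for an arbitrary finite set `A` of agents. Working with a general `A` keeps
the decidability instances on `A` in agreement with those in `walksProb`. -/
theorem neighborhood_upper_of_agents {V A : Type*} [Fintype V] [Fintype A]
    (G : SimpleGraph V) (n d : ℕ)
    (hn : n = Fintype.card V) (hconn : G.Connected) (hreg : G.IsRegularOfDegree d)
    (k : ℕ) (hk : 1 ≤ k) (γ : ℝ) (hγ : 2 * Real.exp 1 * Fintype.card A / n ≤ γ) :
    1 - k * n * (2 : ℝ) ^ (-(γ * d)) ≤
      walksProb (A := A) G k fun x =>
        ∀ u : V, ∀ t : ℕ, t < k →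
          ((∑ v ∈ G.neighborFinset u,
              (Finset.univ.filter fun g : A => x g t = v).card : ℕ) : ℝ)
            ≤ γ * d := by
  have : Nonempty V := hconn.nonempty
  have hn1 : 1 ≤ n := by rw [hn]; exact Fintype.card_pos
  rcases Nat.eq_zero_or_pos d with rfl | hd
  · -- for `d = 0` the left-hand side is `1 - k n ≤ 0`
    have h0 : 1 - (k : ℝ) * n * (2 : ℝ) ^ (-(γ * (0 : ℕ))) ≤ 0 := by
      have h1 : (1 : ℝ) ≤ k * n := by exact_mod_cast Nat.mul_pos hk hn1
      simpa using h1
    refine h0.trans (Finset.sum_nonneg fun x0 _ => Finset.sum_nonneg fun σ _ => ?_)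
    split_ifs
    · exact totW_nonneg G x0 σ
    · exact le_rfl
  set b : ℝ := 2 * Real.exp 1 with hb
  have hb1 : 1 ≤ b := by
    have := Real.add_one_le_exp (1 : ℝ)
    linarith
  have hb0 : 0 < b := by linarith
  let X : (A → V) → (Fin k → A → V → V) → V → ℕ → ℕ := fun x0 σ u t =>
    (univ.filter fun g => G.Adj u (walk x0 (extAV σ) g t)).card
  -- by Markov's inequality for `b ^ X`, this expectation bounds the probability of `X > γ d`
  have htail : ∀ u : V, ∀ t ∈ range k,
      ∑ x0, ∑ σ, totW G x0 σ * (b ^ X x0 σ u t * b ^ (-(γ * d)))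
        ≤ (2 : ℝ) ^ (-(γ * d)) := by
    intro u t ht
    have h1 := sum_totW_pow_le (A := A) hreg hd u k t (Finset.mem_range.1 ht).le
    simp only [← mul_assoc, ← Finset.sum_mul]
    have h2 : Real.exp (2 * Real.exp 1 * Fintype.card A / Fintype.card V * d) ≤ Real.exp (γ * d) := by
      rw [← hn]
      exact Real.exp_le_exp.2 (mul_le_mul_of_nonneg_right hγ (Nat.cast_nonneg d))
    refine (mul_le_mul_of_nonneg_right (h1.trans h2) (by positivity)).trans_eq ?_
    rw [hb, Real.mul_rpow (by norm_num) (Real.exp_pos 1).le, Real.exp_one_rpow,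
      mul_left_comm, ← Real.exp_add]
    simp
  have hpt : ∀ x0 σ, totW G x0 σ
      - ∑ u : V, ∑ t ∈ range k, totW G x0 σ * (b ^ X x0 σ u t * b ^ (-(γ * d)))
      ≤ if (∀ u : V, ∀ t : ℕ, t < k →
          ((∑ v ∈ G.neighborFinset u, (Finset.univ.filter fun g : A =>
            walk x0 (extAV σ) g t = v).card : ℕ) : ℝ) ≤ γ * d)
        then totW G x0 σ else 0 := by
    intro x0 σ
    have hw := totW_nonneg G x0 σ
    have hterm : ∀ u t, 0 ≤ totW G x0 σ * (b ^ X x0 σ u t * b ^ (-(γ * d))) :=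
      fun u t => by positivity
    split_ifs with hE
    · have := Finset.sum_nonneg fun u (_ : u ∈ (univ : Finset V)) =>
        Finset.sum_nonneg fun t (_ : t ∈ range k) => hterm u t
      linarith
    · push Not at hE
      obtain ⟨u, t, ht, hlt⟩ := hE
      rw [sum_card_neighbor u (fun g => walk x0 (extAV σ) g t)] at hlt
      have h1 : 1 ≤ b ^ X x0 σ u t * b ^ (-(γ * d)) := by
        rw [← Real.rpow_natCast, ← Real.rpow_add hb0]
        exact Real.one_le_rpow hb1 (by linarith)
      have h2 : totW G x0 σ ≤
          totW G x0 σ * (b ^ X x0 σ u t * b ^ (-(γ * d))) :=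
        le_mul_of_one_le_right hw h1
      have h3 := Finset.single_le_sum (f := fun t =>
        totW G x0 σ * (b ^ X x0 σ u t * b ^ (-(γ * d)))) (fun t _ => hterm u t)
        (Finset.mem_range.2 ht)
      have h4 := Finset.single_le_sum (f := fun u => ∑ t ∈ range k,
        totW G x0 σ * (b ^ X x0 σ u t * b ^ (-(γ * d))))
        (fun u _ => Finset.sum_nonneg fun t _ => hterm u t) (Finset.mem_univ u)
      linarith
  have hunion : ∑ x0, ∑ σ, ∑ u : V, ∑ t ∈ range k,
      totW G x0 σ * (b ^ X x0 σ u t * b ^ (-(γ * d)))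
      ≤ k * n * (2 : ℝ) ^ (-(γ * d)) := by
    have hswap : ∑ x0, ∑ σ, ∑ u : V, ∑ t ∈ range k,
        totW G x0 σ * (b ^ X x0 σ u t * b ^ (-(γ * d)))
        = ∑ u : V, ∑ t ∈ range k, ∑ x0, ∑ σ,
        totW G x0 σ * (b ^ X x0 σ u t * b ^ (-(γ * d))) := by
      exact sum_swap _ _ _ _ _
    rw [hswap]
    refine (Finset.sum_le_sum fun u _ => Finset.sum_le_sum fun t ht => htail u t ht).trans_eq ?_
    simp only [sum_const, card_univ, card_range, nsmul_eq_mul, ← hn]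
    ring
  have hsum := Finset.sum_le_sum fun x0 (_ : x0 ∈ (univ : Finset (A → V))) =>
    Finset.sum_le_sum fun σ (_ : σ ∈ (univ : Finset (Fin k → A → V → V))) => hpt x0 σ
  simp only [Finset.sum_sub_distrib] at hsum
  rw [sum_totW hreg hd] at hsum
  refine le_trans (by linarith) (hsum.trans_eq ?_)
  -- the two sides differ only in the decidability instance of the event
  refine Finset.sum_congr rfl fun x0 _ => Finset.sum_congr rfl fun σ _ => ?_
  simp only [totW]
  congr

end Rumor

/-- For `m` independent stationary simple random walks on a connected
`d`-regular graph `G` on `n` vertices, for every `k ≥ 1` and `γ ≥ 2e·m/n`, with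
probability at least `1 − k n 2^{−γ d}`, simultaneously for every vertex `u` and every
round `0 ≤ t < k` the total number of walks in the neighborhood `Γ(u)` at round `t` is
at most `γ d`. -/
theorem walks_neighborhood_upper (V : Type) [Fintype V] (G : SimpleGraph V) (n d m : ℕ)
    (hn : n = Fintype.card V) (hconn : G.Connected) (hreg : G.IsRegularOfDegree d)
    (k : ℕ) (hk : 1 ≤ k) (γ : ℝ) (hγ : 2 * Real.exp 1 * m / n ≤ γ) :
    1 - k * n * (2 : ℝ) ^ (-(γ * d)) ≤
      Rumor.walksProb (A := Fin m) G k fun x =>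
        ∀ u : V, ∀ t : ℕ, t < k →
          ((∑ v ∈ G.neighborFinset u,
              (Finset.univ.filter fun g : Fin m => x g t = v).card : ℕ) : ℝ)
            ≤ γ * d := by
  exact Rumor.neighborhood_upper_of_agents (A := Fin m) G n d hn hconn hreg k hk γ
    (by simpa using hγ)
end
end

section
/- For every integer k ≥ 1, every integer m ≥ 1 with b = 2^m, and every integer L ≥ m, the product ∏_{ℓ=m}^{L} (2^ℓ + 1)^{b·k / 2^ℓ} (with real exponents) is at most (4b)^{2k}. -/
/-!
Since `2 ^ ℓ + 1 ≤ 2 ^ (ℓ + 1)`, the base-2 logarithm of the product is at most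
`k * ∑_{ℓ=m}^{L} (ℓ + 1) * 2 ^ m / 2 ^ ℓ`. This arithmetic-geometric sum telescopes to
`k * (2 * (m + 2) - 2 ^ m * (L + 3) / 2 ^ L)`, which is at most `2 * k * (m + 2)`, the base-2
logarithm of `(4 * 2 ^ m) ^ (2 * k)`.
-/

/-- The sharper bound that can be proved by induction on `L`: the exponent keeps the remainder
of the arithmetic-geometric sum. -/
lemma prod_le_two_rpow (k m L : ℕ) (hL : m ≤ L) :
    ∏ ℓ ∈ Finset.Icc m L, ((2 : ℝ) ^ ℓ + 1) ^ (((2 : ℝ) ^ m * k) / 2 ^ ℓ)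
      ≤ (2 : ℝ) ^ ((2 * k * (m + 2) : ℝ) - (2 : ℝ) ^ m * k * (L + 3) / 2 ^ L) := by
  have factor_le (ℓ : ℕ) : ((2 : ℝ) ^ ℓ + 1) ^ (((2 : ℝ) ^ m * k) / 2 ^ ℓ)
      ≤ (2 : ℝ) ^ (((ℓ : ℝ) + 1) * (((2 : ℝ) ^ m * k) / 2 ^ ℓ)) := by
    rw [Real.rpow_mul (by norm_num)]
    refine Real.rpow_le_rpow (by positivity) ?_ (by positivity)
    have h : (1 : ℝ) ≤ 2 ^ ℓ := one_le_pow₀ (by norm_num)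
    rw [← Nat.cast_succ, Real.rpow_natCast, Nat.succ_eq_add_one, pow_succ]
    linarith
  induction L, hL using Nat.le_induction with
  | base =>
    rw [Finset.Icc_self, Finset.prod_singleton]
    refine (factor_le m).trans_eq ?_
    congr 1
    field_simp
    ring
  | succ n hn ih =>
    rw [Finset.prod_Icc_succ_top (by omega)]
    refine (mul_le_mul ih (factor_le (n + 1)) (by positivity) (by positivity)).trans_eq ?_
    rw [← Real.rpow_add (by norm_num)]
    congr 1
    push_cast
    field_simp
    ring

/-- For every integer `k ≥ 1`, every `b = 2^m` with `m ≥ 1` and every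
integer `L ≥ m`, `∏_{ℓ=m}^{L} (2^ℓ + 1)^{b k / 2^ℓ} ≤ (4b)^{2k}` (real exponents). -/
theorem descriptor_count_bound (k m L b : ℕ) (hk : 1 ≤ k) (hm : 1 ≤ m) (hL : m ≤ L)
    (hb : b = 2 ^ m) :
    ∏ ℓ ∈ Finset.Icc m L, ((2 : ℝ) ^ ℓ + 1) ^ (((b : ℝ) * k) / 2 ^ ℓ)
      ≤ ((4 : ℝ) * b) ^ (2 * k) := by
  subst hb
  push_cast
  refine (prod_le_two_rpow k m L hL).trans ?_
  have rhs_eq : ((4 : ℝ) * 2 ^ m) ^ (2 * k) = (2 : ℝ) ^ (2 * k * (m + 2) : ℝ) := by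
    have h : (4 : ℝ) * 2 ^ m = 2 ^ (m + 2) := by ring
    rw [h, ← pow_mul, ← Real.rpow_natCast]
    congr 1
    push_cast
    ring
  rw [rhs_eq]
  refine Real.rpow_le_rpow_of_exponent_le (by norm_num) (sub_le_self _ (by positivity))
end
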